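/- arXiv:1803.10001 — 6 statements merged into one kernel-verified Lean document; each statement's English description precedes it below -/
import Mathlib

section
/- For every real λ > 0, every complex α with Re α > 0, and every real T, the Fourier transform of the Gamma function along a vertical line satisfies the exact identity ∫_{-∞}^{∞} Γ(iλz + α) e^{-iTz} dz = (2π/λ) exp(−e^{T/λ} + Tα/λ). -/
/-!
`Γ` is the Mellin transform of `x ↦ exp (-x)` on `0 < re s`. It decays on vertical lines at least
like `‖s‖⁻²`, because `s (s + 1) Γ(s) = Γ(s + 2)` and `‖Γ(s + 2)‖ ≤ Γ(re s + 2)`, so Mellin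
inversion applies on the line `re s = re α`. Inversion at the point `x = exp (T / λ)` is the
claimed identity after the affine substitution `y = λ z + im α`, under which
`re α + i y = i λ z + α`.
-/

open MeasureTheory

section GammaDecay

variable {s : ℂ}

lemma norm_Gamma_le_Gamma_re (hs : 0 < s.re) : ‖Complex.Gamma s‖ ≤ Real.Gamma s.re := by
  rw [Complex.Gamma_eq_integral hs, Real.Gamma_eq_integral hs, Complex.GammaIntegral]
  refine (norm_integral_le_integral_norm _).trans_eq ?_
  refine setIntegral_congr_fun measurableSet_Ioi fun x hx => ?_
  simp [Complex.norm_cpow_eq_rpow_re_of_pos hx, Complex.norm_exp]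

lemma Gamma_add_two_eq_mul (hs : s ≠ 0) (hs' : s + 1 ≠ 0) :
    Complex.Gamma (s + 2) = (s + 1) * (s * Complex.Gamma s) := by
  rw [← Complex.Gamma_add_one s hs, ← Complex.Gamma_add_one (s + 1) hs', add_assoc,
    one_add_one_eq_two]

lemma norm_Gamma_le_Gamma_re_add_two_div_norm_sq (hs : 0 < s.re) :
    ‖Complex.Gamma s‖ ≤ Real.Gamma (s.re + 2) / ‖s‖ ^ 2 := by
  have hs₀ : s ≠ 0 := Complex.ne_zero_of_re_pos hs
  have hs₁ : s + 1 ≠ 0 := Complex.ne_zero_of_re_pos (by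
    rw [Complex.add_re, Complex.one_re]
    positivity)
  have norm_le_norm_add_one : ‖s‖ ≤ ‖s + 1‖ := by
    rw [← sq_le_sq₀ (norm_nonneg _) (norm_nonneg _), Complex.sq_norm, Complex.sq_norm,
      Complex.normSq_apply, Complex.normSq_apply]
    simp only [Complex.add_re, Complex.add_im, Complex.one_re, Complex.one_im]
    nlinarith
  rw [le_div_iff₀ (by positivity)]
  calc ‖Complex.Gamma s‖ * ‖s‖ ^ 2 = ‖s‖ * (‖s‖ * ‖Complex.Gamma s‖) := by ring
    _ ≤ ‖s + 1‖ * (‖s‖ * ‖Complex.Gamma s‖) := by gcongr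
    _ = ‖Complex.Gamma (s + 2)‖ := by rw [Gamma_add_two_eq_mul hs₀ hs₁, norm_mul, norm_mul]
    _ ≤ Real.Gamma (s.re + 2) := by
      have hs₂ : 0 < (s + 2).re := by
        rw [Complex.add_re, Complex.re_ofNat]
        positivity
      simpa using norm_Gamma_le_Gamma_re hs₂

end GammaDecay

lemma integrable_inv_sq_add_sq {a : ℝ} (ha : a ≠ 0) :
    Integrable fun x : ℝ => (a ^ 2 + x ^ 2)⁻¹ := by
  refine ((integrable_inv_one_add_sq.comp_div ha).const_mul (a ^ 2)⁻¹).congr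
    (.of_forall fun x => ?_)
  simp only [← mul_inv]
  field_simp

section VerticalLine

variable {σ : ℝ}

lemma continuous_Gamma_vertical (hσ : ∀ n : ℕ, σ ≠ -n) :
    Continuous fun y : ℝ => Complex.Gamma (σ + y * Complex.I) := by
  refine continuous_iff_continuousAt.2 fun y => ?_
  refine ContinuousAt.comp (g := Complex.Gamma) (f := fun y : ℝ => (σ + y * Complex.I : ℂ))
    (Complex.continuousAt_Gamma _ fun n h => hσ n ?_) (by fun_prop)
  simpa using congrArg Complex.re h

lemma verticalIntegrable_Gamma (hσ : 0 < σ) : Complex.VerticalIntegrable Complex.Gamma σ := by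
  have not_pole (n : ℕ) : σ ≠ -n :=
    (neg_nonpos.2 n.cast_nonneg |>.trans_lt hσ).ne'
  refine ((integrable_inv_sq_add_sq hσ.ne').const_mul (Real.Gamma (σ + 2))).mono'
    (continuous_Gamma_vertical not_pole).aestronglyMeasurable (.of_forall fun y => ?_)
  simpa [Complex.sq_norm, Complex.normSq_add_mul_I, div_eq_mul_inv] using
    norm_Gamma_le_Gamma_re_add_two_div_norm_sq (s := σ + y * Complex.I) (by simpa using hσ)

lemma hasMellin_exp_neg {s : ℂ} (hs : 0 < s.re) :
    HasMellin (fun x : ℝ => (Real.exp (-x) : ℂ)) s (Complex.Gamma s) := by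
  refine ⟨(Complex.GammaIntegral_convergent hs).congr_fun (fun x _ => ?_) measurableSet_Ioi, ?_⟩
  · simp [mul_comm]
  · rw [← Complex.GammaIntegral_eq_mellin, Complex.Gamma_eq_integral hs]

lemma mellinInv_Gamma (hσ : 0 < σ) {x : ℝ} (hx : 0 < x) :
    mellinInv σ Complex.Gamma x = Real.exp (-x) := by
  have mellin_on_line (y : ℝ) : mellin (fun x : ℝ => (Real.exp (-x) : ℂ)) (σ + y * Complex.I) =
      Complex.Gamma (σ + y * Complex.I) := (hasMellin_exp_neg (by simpa using hσ)).2
  have hint : Complex.VerticalIntegrable (mellin fun x : ℝ => (Real.exp (-x) : ℂ)) σ := by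
    simpa only [Complex.VerticalIntegrable, mellin_on_line] using verticalIntegrable_Gamma hσ
  rw [← mellinInv_mellin_eq σ (fun x : ℝ => (Real.exp (-x) : ℂ)) hx
    (hasMellin_exp_neg (by simpa using hσ)).1 hint (by fun_prop)]
  simp only [mellinInv, mellin_on_line]

lemma integral_exp_neg_mul_Gamma_ofReal_add_mul_I (hσ : 0 < σ) (t : ℝ) :
    ∫ y : ℝ, Complex.exp (-(t * (σ + y * Complex.I))) * Complex.Gamma (σ + y * Complex.I) =
      2 * Real.pi * Complex.exp (-(Real.exp t : ℝ)) := by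
  have cpow_exp (w : ℂ) : ((Real.exp t : ℝ) : ℂ) ^ (-w) = Complex.exp (-(t * w)) := by
    rw [Complex.cpow_def_of_ne_zero (by simp), ← Complex.ofReal_log (Real.exp_pos t).le,
      Real.log_exp, mul_neg]
  have two_pi_ne_zero : (2 * Real.pi : ℂ) ≠ 0 := by simp [Real.pi_ne_zero]
  have inversion := mellinInv_Gamma hσ (Real.exp_pos t)
  simp only [mellinInv, cpow_exp, smul_eq_mul, Complex.real_smul] at inversion
  rw [← inv_mul_eq_iff_eq_mul₀ two_pi_ne_zero]
  simpa using inversion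

end VerticalLine

lemma integral_exp_neg_mul_Gamma_add_mul_I {α : ℂ} (hα : 0 < α.re) (t : ℝ) :
    ∫ y : ℝ, Complex.exp (-(t * (α + y * Complex.I))) * Complex.Gamma (α + y * Complex.I) =
      2 * Real.pi * Complex.exp (-(Real.exp t : ℝ)) := by
  let F : ℝ → ℂ := fun y =>
    Complex.exp (-(t * (α.re + y * Complex.I))) * Complex.Gamma (α.re + y * Complex.I)
  have point_eq (y : ℝ) : α + y * Complex.I = α.re + (y + α.im : ℝ) * Complex.I := by
    push_cast
    linear_combination -Complex.re_add_im α
  calc _ = ∫ y : ℝ, F (y + α.im) := by simp only [F, point_eq]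
    _ = ∫ y : ℝ, F y := integral_add_right_eq_self F α.im
    _ = _ := integral_exp_neg_mul_Gamma_ofReal_add_mul_I hα t

theorem fourier_transform_Gamma_general {lam : ℝ} (hlam : lam ≠ 0) {α : ℂ} (hα : 0 < α.re)
    (T : ℝ) :
    ∫ z : ℝ, Complex.Gamma (Complex.I * lam * z + α) * Complex.exp (-(Complex.I * T * z)) =
      ((2 * Real.pi / |lam| : ℝ) : ℂ) *
        Complex.exp (-((Real.exp (T / lam) : ℝ) : ℂ) + (T : ℂ) * α / (lam : ℂ)) := by
  let F : ℝ → ℂ := fun y =>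
    Complex.exp (-((T / lam : ℝ) * (α + y * Complex.I))) * Complex.Gamma (α + y * Complex.I)
  have integrand_eq (z : ℝ) :
      Complex.Gamma (Complex.I * lam * z + α) * Complex.exp (-(Complex.I * T * z)) =
        Complex.exp (T * α / lam) * F (lam * z) := by
    have point_eq : α + (lam * z : ℝ) * Complex.I = Complex.I * lam * z + α := by
      push_cast
      ring
    have exponent_eq : -(Complex.I * T * z) =
        T * α / lam + -((T / lam : ℝ) * (Complex.I * lam * z + α)) := by
      push_cast
      field_simp [Complex.ofReal_ne_zero.2 hlam]
      ring
    simp only [F]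
    rw [point_eq, exponent_eq, Complex.exp_add]
    ring
  calc ∫ z : ℝ, Complex.Gamma (Complex.I * lam * z + α) * Complex.exp (-(Complex.I * T * z))
      = Complex.exp (T * α / lam) * ∫ z : ℝ, F (lam * z) := by
        simp only [integrand_eq, integral_const_mul]
    _ = Complex.exp (T * α / lam) * (|lam⁻¹| • ∫ y : ℝ, F y) := by
        rw [Measure.integral_comp_mul_left]
    _ = _ := by
        rw [integral_exp_neg_mul_Gamma_add_mul_I hα, Complex.exp_add, abs_inv, Complex.real_smul]
        push_cast
        ring

/-- **Fourier transform of a single Gamma function.**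
For every real `λ > 0`, every complex `α` with `Re α > 0`, and every real `T`,
`∫_{-∞}^{∞} Γ(iλz + α) e^{-iTz} dz = (2π/λ) exp(−e^{T/λ} + Tα/λ)`. -/
theorem fourier_transform_Gamma (lam : ℝ) (hlam : 0 < lam) (α : ℂ) (hα : 0 < α.re) (T : ℝ) :
    (∫ z : ℝ, Complex.Gamma (Complex.I * lam * z + α) * Complex.exp (-(Complex.I * T * z))) =
      ((2 * Real.pi / lam : ℝ) : ℂ) *
        Complex.exp (-((Real.exp (T / lam) : ℝ) : ℂ) + (T : ℂ) * α / (lam : ℂ)) := by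
  simpa only [abs_of_pos hlam] using fourier_transform_Gamma_general hlam.ne' hα T
end

section
/- Let k ≥ 1, let λ_1,…,λ_k > 0 be reals and α_1,…,α_k ∈ ℂ with Re α_j > 0 for all j. Set Λ = ∑_{j=1}^k λ_j, A = ∑_{j=1}^k α_j and C_k = (2π)^{(k+1)/2} Λ^{−1/2} ∏_{j=1}^k λ_j^{−1/2 + α_j + λ_j((k−1)/2 − A)/Λ}. Then as T → +∞, ∫_{-∞}^{∞} (∏_{j=1}^k Γ(α_j + iλ_j z)) e^{-iTz} dz = C_k · exp(−Λ e^{T/Λ} ∏_{j=1}^k λ_j^{−λ_j/Λ} + T(A − (k−1)/2)/Λ) · (1 + O(e^{−T/Λ})); i.e. the ratio of the left side to C_k exp(−Λ e^{T/Λ} ∏ λ_j^{−λ_j/Λ} + T(A − (k−1)/2)/Λ) equals 1 + O(e^{−T/Λ}) as T → ∞. -/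
open Filter Finset

/-!
The function `y ↦ Γ(α + iy)` is the Fourier transform of `u ↦ exp (-e^u + αu)`, so Fourier
inversion turns the integral into `2π/λ₀` times the integral of `∏ⱼ exp (-e^{uⱼ} + αⱼuⱼ)` over the
hyperplane `∑ⱼ λⱼuⱼ = T`. For large `T` the integrand is concentrated near `uⱼ = ν + log λⱼ`, where
`ν` is fixed by the hyperplane equation. Rescaling by `ε = e^{-ν/2}` around this point leaves a
product of factors of the form (Gaussian) + `ε` · (odd function) + `O(ε²)`; the odd term integrates
to zero, so the relative error is `O(ε²) = O(e^{-T/Λ})`. The Gaussian integral over the hyperplane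
is evaluated by reading the same inversion formula backwards.
-/

section FourierInversion

open MeasureTheory Complex
open scoped FourierTransform

/-- The Fourier transform `y ↦ ∫ f(u) e^{iyu} du`, in the normalisation for which the transform of
`u ↦ exp (-e^u + α u)` is `y ↦ Γ(α + iy)`. -/
noncomputable def fourierExp (f : ℝ → ℂ) (y : ℝ) : ℂ :=
  ∫ u : ℝ, f u * cexp (I * y * u)

lemma fourierInv_eq_fourierExp (f : ℝ → ℂ) (v : ℝ) : 𝓕⁻ f v = fourierExp f (2 * Real.pi * v) := by
  rw [Real.fourierInv_eq', fourierExp]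
  refine integral_congr_ae (.of_forall fun u => ?_)
  simp only [smul_eq_mul, Real.inner_apply, mul_comm (f u)]
  congr 2
  push_cast
  ring

variable {f : ℝ → ℂ}

lemma integral_fourierExp_mul_cexp (hf : Continuous f) (hfi : Integrable f)
    (hFi : Integrable (fourierExp f)) (t : ℝ) :
    ∫ y : ℝ, fourierExp f y * cexp (-(I * t * y)) = 2 * Real.pi * f t := by
  have hinv : Integrable (𝓕⁻ f) := by
    simpa only [← fourierInv_eq_fourierExp] using hFi.comp_mul_left' Real.two_pi_pos.ne'
  have hfour : Integrable (𝓕 f) := by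
    simpa only [Real.fourierInv_eq_fourier_neg, neg_neg] using hinv.comp_neg
  have hscale := Measure.integral_comp_mul_left
    (fun y : ℝ => fourierExp f y * cexp (-(I * t * y))) (2 * Real.pi)
  have hinversion : ∫ v : ℝ, fourierExp f (2 * Real.pi * v) *
      cexp (-(I * t * (2 * Real.pi * v : ℝ))) = f t := by
    rw [← congrFun (hf.fourier_fourierInv_eq hfi hfour) t, Real.fourier_eq']
    refine integral_congr_ae (.of_forall fun v => ?_)
    simp only [smul_eq_mul, Real.inner_apply, fourierInv_eq_fourierExp, mul_comm (fourierExp f _)]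
    congr 2
    push_cast
    ring
  rw [hinversion, abs_of_pos (by positivity), real_smul, ofReal_inv,
    eq_inv_mul_iff_mul_eq₀ (by exact_mod_cast Real.two_pi_pos.ne')] at hscale
  rw [← hscale]
  push_cast
  ring

lemma integral_fourierExp_comp_mul_left_mul_cexp (hf : Continuous f) (hfi : Integrable f)
    (hFi : Integrable (fourierExp f)) {c : ℝ} (hc : 0 < c) (t : ℝ) :
    ∫ z : ℝ, fourierExp f (c * z) * cexp (-(I * t * z)) = (2 * Real.pi / c : ℝ) * f (t / c) := by
  have hc' : (c : ℂ) ≠ 0 := mod_cast hc.ne'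
  calc ∫ z : ℝ, fourierExp f (c * z) * cexp (-(I * t * z))
      = ∫ z : ℝ, fourierExp f (c * z) * cexp (-(I * (t / c : ℝ) * (c * z : ℝ))) := by
        congr! 4 with z
        push_cast
        field_simp
    _ = c⁻¹ * (2 * Real.pi * f (t / c)) := by
        rw [Measure.integral_comp_mul_left
          (fun y : ℝ => fourierExp f y * cexp (-(I * (t / c : ℝ) * y))),
          integral_fourierExp_mul_cexp hf hfi hFi, abs_of_pos (inv_pos.2 hc), real_smul, ofReal_inv]
    _ = (2 * Real.pi / c : ℝ) * f (t / c) := by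
        push_cast
        ring

end FourierInversion

section HyperplaneConvolution

open MeasureTheory Complex

variable {n : ℕ} {lam : Fin (n + 1) → ℝ}

/-- The point `u` of the hyperplane `∑ j, lam j * u j = T` whose coordinates `u 1, …, u n` are
given by `x`. -/
noncomputable def hyperplanePoint (lam : Fin (n + 1) → ℝ) (T : ℝ) (x : Fin n → ℝ) :
    Fin (n + 1) → ℝ :=
  Fin.cons ((T - ∑ j, lam j.succ * x j) / lam 0) x

@[simp] lemma hyperplanePoint_zero (T : ℝ) (x : Fin n → ℝ) :
    hyperplanePoint lam T x 0 = (T - ∑ j, lam j.succ * x j) / lam 0 := rfl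

@[simp] lemma hyperplanePoint_succ (T : ℝ) (x : Fin n → ℝ) (j : Fin n) :
    hyperplanePoint lam T x j.succ = x j := rfl

lemma measurable_hyperplanePoint (T : ℝ) (j : Fin (n + 1)) :
    Measurable fun x : Fin n → ℝ => hyperplanePoint lam T x j := by
  cases j using Fin.cases with
  | zero => simp only [hyperplanePoint_zero]; fun_prop
  | succ j => simp only [hyperplanePoint_succ]; fun_prop

lemma sum_mul_hyperplanePoint (h0 : lam 0 ≠ 0) (T : ℝ) (x : Fin n → ℝ) :
    ∑ j, lam j * hyperplanePoint lam T x j = T := by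
  simp [Fin.sum_univ_succ, mul_div_cancel₀ _ h0]

lemma hyperplanePoint_neg (x : Fin n → ℝ) :
    hyperplanePoint lam 0 (-x) = -hyperplanePoint lam 0 x := by
  ext j
  cases j using Fin.cases <;> simp [neg_div]

lemma hyperplanePoint_smul_add (h0 : lam 0 ≠ 0) (ε : ℝ) (x : Fin n → ℝ) (c : Fin (n + 1) → ℝ) :
    hyperplanePoint lam (∑ j, lam j * c j) (ε • x + Fin.tail c) =
      ε • hyperplanePoint lam 0 x + c := by
  ext j
  cases j using Fin.cases with
  | zero =>
    have hsum : ∑ j : Fin n, lam j.succ * (ε * x j) = ε * ∑ j : Fin n, lam j.succ * x j := by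
      rw [mul_sum]
      exact sum_congr rfl fun j _ => by ring
    simp only [hyperplanePoint_zero, Fin.sum_univ_succ, Pi.add_apply, Pi.smul_apply, smul_eq_mul,
      Fin.tail, mul_add, sum_add_distrib, hsum]
    field_simp
    ring
  | succ j => simp [Fin.tail]

-- After unfolding the transforms of `f 1, …, f n` and swapping integrals, the integral over `z`
-- inverts the transform of `f 0` at the zeroth coordinate of the hyperplane point.
lemma integral_prod_fourierExp_mul_cexp (h0 : 0 < lam 0) {f : Fin (n + 1) → ℝ → ℂ}
    (hf : Continuous (f 0)) (hfi : ∀ j, Integrable (f j)) (hFi : Integrable (fourierExp (f 0)))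
    (T : ℝ) :
    ∫ z : ℝ, (∏ j, fourierExp (f j) (lam j * z)) * cexp (-(I * T * z)) =
      (2 * Real.pi / lam 0 : ℝ) * ∫ x : Fin n → ℝ, ∏ j, f j (hyperplanePoint lam T x j) := by
  let s (x : Fin n → ℝ) : ℝ := T - ∑ j, lam j.succ * x j
  let K (z : ℝ) (x : Fin n → ℝ) : ℂ :=
    fourierExp (f 0) (lam 0 * z) * (∏ j, f j.succ (x j)) * cexp (-(I * s x * z))
  have hphase (z : ℝ) (x : Fin n → ℝ) :
      cexp (-(I * s x * z)) = cexp (-(I * T * z)) * ∏ j, cexp (I * (lam j.succ * z : ℝ) * x j) := by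
    have hsum : ∑ j, I * (lam j.succ * z : ℝ) * x j = I * z * ∑ j, (lam j.succ : ℂ) * x j := by
      rw [mul_sum]
      exact sum_congr rfl fun j _ => by push_cast; ring
    rw [← Complex.exp_sum, ← Complex.exp_add, hsum]
    congr 1
    push_cast [s]
    ring
  have hunfold (z : ℝ) : (∏ j, fourierExp (f j) (lam j * z)) * cexp (-(I * T * z)) =
      ∫ x : Fin n → ℝ, K z x := by
    have hprod : ∏ j : Fin n, fourierExp (f j.succ) (lam j.succ * z) =
        ∫ x : Fin n → ℝ, ∏ j, f j.succ (x j) * cexp (I * (lam j.succ * z : ℝ) * x j) :=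
      (integral_fintype_prod_volume_eq_prod _).symm
    rw [Fin.prod_univ_succ, hprod, mul_right_comm, ← integral_const_mul]
    refine integral_congr_ae (.of_forall fun x => ?_)
    simp only [K, hphase, prod_mul_distrib]
    ring
  have hK : Integrable (Function.uncurry K) (volume.prod volume) := by
    have hprod := (hFi.comp_mul_left' h0.ne').mul_prod
      (Integrable.fintype_prod fun j : Fin n => hfi j.succ)
    refine hprod.mul_bdd (c := 1) (g := fun p : ℝ × (Fin n → ℝ) => cexp (-(I * s p.2 * p.1)))
      (Continuous.aestronglyMeasurable (by fun_prop)) (.of_forall fun p => ?_)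
    simp [Complex.norm_exp]
  have hinner (x : Fin n → ℝ) : ∫ z : ℝ, K z x =
      (2 * Real.pi / lam 0 : ℝ) * ∏ j, f j (hyperplanePoint lam T x j) := by
    simp only [K, mul_right_comm _ (∏ j, f j.succ (x j))]
    rw [integral_mul_const, integral_fourierExp_comp_mul_left_mul_cexp hf (hfi 0) hFi h0,
      Fin.prod_univ_succ, mul_assoc]
    rfl
  simp_rw [hunfold, integral_integral_swap hK, hinner, integral_const_mul]

end HyperplaneConvolution

section GammaVerticalLine

open MeasureTheory Complex

section ExpSubstitution

variable {E : Type*} [NormedAddCommGroup E] [NormedSpace ℝ E] (g : ℝ → E)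

lemma exp_image_univ : Real.exp '' Set.univ = Set.Ioi 0 := by
  rw [Set.image_univ, Real.range_exp]

lemma integral_exp_smul_comp_exp : ∫ u, Real.exp u • g (Real.exp u) = ∫ x in Set.Ioi 0, g x := by
  rw [← exp_image_univ, integral_image_eq_integral_abs_deriv_smul .univ
    (fun u _ => (Real.hasDerivAt_exp u).hasDerivWithinAt) Real.exp_injective.injOn]
  simp

lemma integrable_exp_smul_comp_exp_iff :
    Integrable (fun u => Real.exp u • g (Real.exp u)) ↔ IntegrableOn g (Set.Ioi 0) := by
  rw [← exp_image_univ, integrableOn_image_iff_integrableOn_abs_deriv_smul .univ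
    (fun u _ => (Real.hasDerivAt_exp u).hasDerivWithinAt) Real.exp_injective.injOn]
  simp

end ExpSubstitution

/-- The integrand of Euler's integral for `Γ(α)` in the variable `u = log x`. -/
noncomputable def logGammaIntegrand (α : ℂ) (u : ℝ) : ℂ :=
  cexp (-(Real.exp u : ℂ) + α * u)

lemma continuous_logGammaIntegrand (α : ℂ) : Continuous (logGammaIntegrand α) := by
  unfold logGammaIntegrand
  fun_prop

lemma logGammaIntegrand_eq_exp_smul (α : ℂ) (u : ℝ) :
    logGammaIntegrand α u =
      Real.exp u • ((Real.exp (-Real.exp u) : ℂ) * (Real.exp u : ℂ) ^ (α - 1)) := by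
  rw [logGammaIntegrand, real_smul, cpow_def_of_ne_zero (by exact_mod_cast Real.exp_ne_zero u),
    ← ofReal_log (Real.exp_pos u).le, Real.log_exp]
  push_cast
  rw [← Complex.exp_add, ← Complex.exp_add]
  congr 1
  ring

variable {α : ℂ}

lemma integrable_logGammaIntegrand (hα : 0 < α.re) : Integrable (logGammaIntegrand α) := by
  simpa only [← logGammaIntegrand_eq_exp_smul] using
    (integrable_exp_smul_comp_exp_iff _).2 (GammaIntegral_convergent hα)

lemma integral_logGammaIntegrand (hα : 0 < α.re) : ∫ u, logGammaIntegrand α u = Gamma α := by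
  rw [Gamma_eq_integral hα, GammaIntegral, ← integral_exp_smul_comp_exp]
  simp only [logGammaIntegrand_eq_exp_smul]

lemma fourierExp_logGammaIntegrand (hα : 0 < α.re) (y : ℝ) :
    fourierExp (logGammaIntegrand α) y = Gamma (α + I * y) := by
  rw [← integral_logGammaIntegrand (by simpa using hα), fourierExp]
  refine integral_congr_ae (.of_forall fun u => ?_)
  simp only [logGammaIntegrand, ← Complex.exp_add]
  congr 1
  ring

lemma norm_Gamma_le_Gamma_re_s1 (hα : 0 < α.re) : ‖Gamma α‖ ≤ Real.Gamma α.re := by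
  rw [Gamma_eq_integral hα, GammaIntegral, Real.Gamma_eq_integral hα]
  refine (norm_integral_le_integral_norm _).trans_eq
    (setIntegral_congr_fun measurableSet_Ioi fun x hx => ?_)
  simp [norm_cpow_eq_rpow_re_of_pos hx, Complex.norm_exp]

lemma continuous_Gamma_vertical_s1 (hα : 0 < α.re) : Continuous fun y : ℝ => Gamma (α + I * y) := by
  refine continuous_iff_continuousAt.2 fun y =>
    (differentiableAt_Gamma _ fun m hm => ?_).continuousAt.comp (f := fun y : ℝ => α + I * y)
      (by fun_prop)
  have hre : α.re = -m := by simpa using congrArg re hm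
  linarith [m.cast_nonneg (α := ℝ)]

lemma sq_norm_mul_norm_Gamma_le (hα : 0 < α.re) : ‖α‖ ^ 2 * ‖Gamma α‖ ≤ Real.Gamma (α.re + 2) := by
  have hα0 : α ≠ 0 := by
    rintro rfl
    simp at hα
  have hα1 : α + 1 ≠ 0 := fun h => by
    have hre : α.re + 1 = 0 := by simpa using congrArg re h
    linarith
  have hnorm : ‖α‖ ≤ ‖α + 1‖ := by
    rw [← sq_le_sq₀ (norm_nonneg _) (norm_nonneg _), ← normSq_eq_norm_sq, ← normSq_eq_norm_sq,
      normSq_apply, normSq_apply]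
    simp only [add_re, one_re, add_im, one_im]
    nlinarith
  calc ‖α‖ ^ 2 * ‖Gamma α‖
      ≤ ‖α + 1‖ * (‖α‖ * ‖Gamma α‖) := by
        rw [sq, mul_assoc]
        gcongr
    _ = ‖Gamma (α + 2)‖ := by
        rw [← norm_mul, ← norm_mul, ← Gamma_add_one α hα0, ← Gamma_add_one _ hα1, add_assoc,
          one_add_one_eq_two]
    _ ≤ Real.Gamma (α.re + 2) := by
        simpa using norm_Gamma_le_Gamma_re_s1 (α := α + 2) (by simp; linarith)

lemma integrable_Gamma_vertical (hα : 0 < α.re) :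
    Integrable fun y : ℝ => Gamma (α + I * y) := by
  obtain ⟨m, hm0, hm1, hmα⟩ : ∃ m : ℝ, 0 < m ∧ m ≤ 1 ∧ m ≤ α.re ^ 2 :=
    ⟨min 1 (α.re ^ 2), by positivity, min_le_left _ _, min_le_right _ _⟩
  have hdom : Integrable fun y : ℝ => Real.Gamma (α.re + 2) / m * (1 + (α.im + y) ^ 2)⁻¹ :=
    (integrable_inv_one_add_sq.comp_add_left α.im).const_mul _
  refine hdom.mono' (continuous_Gamma_vertical_s1 hα).aestronglyMeasurable (.of_forall fun y => ?_)
  have hre : (α + I * y).re = α.re := by simp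
  have him : (α + I * y).im = α.im + y := by simp
  have hsq : m * (1 + (α.im + y) ^ 2) ≤ ‖α + I * y‖ ^ 2 := by
    rw [← normSq_eq_norm_sq, normSq_apply, hre, him]
    nlinarith [sq_nonneg (α.im + y)]
  rw [div_mul_eq_mul_div, le_div_iff₀ hm0, ← div_eq_mul_inv, le_div_iff₀ (by positivity)]
  calc ‖Gamma (α + I * y)‖ * m * (1 + (α.im + y) ^ 2)
      = m * (1 + (α.im + y) ^ 2) * ‖Gamma (α + I * y)‖ := by ring
    _ ≤ ‖α + I * y‖ ^ 2 * ‖Gamma (α + I * y)‖ := by gcongr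
    _ ≤ Real.Gamma (α.re + 2) := by
        simpa only [hre] using sq_norm_mul_norm_Gamma_le (α := α + I * y) (by rwa [hre])

variable {n : ℕ} {lam : Fin (n + 1) → ℝ} {α : Fin (n + 1) → ℂ}

lemma integral_prod_Gamma_mul_cexp (h0 : 0 < lam 0) (hα : ∀ j, 0 < (α j).re) (T : ℝ) :
    ∫ z : ℝ, (∏ j, Gamma (α j + I * lam j * z)) * cexp (-(I * T * z)) =
      (2 * Real.pi / lam 0 : ℝ) *
        ∫ x : Fin n → ℝ, ∏ j, logGammaIntegrand (α j) (hyperplanePoint lam T x j) := by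
  have hΓ (j : Fin (n + 1)) :
      fourierExp (logGammaIntegrand (α j)) = fun y : ℝ => Gamma (α j + I * y) :=
    funext (fourierExp_logGammaIntegrand (hα j))
  rw [← integral_prod_fourierExp_mul_cexp h0 (continuous_logGammaIntegrand _)
    (fun j => integrable_logGammaIntegrand (hα j)) (hΓ 0 ▸ integrable_Gamma_vertical (hα 0))]
  simp only [hΓ, ofReal_mul, mul_assoc]

end GammaVerticalLine

section ParityExpansion

open Asymptotics MeasureTheory Topology

lemma isBigO_fst_pow_mul {X : Type*} (m : ℕ) (D : X → ℝ) :
    (fun p : ℝ × X => p.1 ^ m * D p.2) =O[𝓝[>] 0 ×ˢ ⊤] fun p => D p.2 := by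
  have hfst : Tendsto (fun p : ℝ × X => p.1 ^ m) (𝓝[>] 0 ×ˢ ⊤) (𝓝 (0 ^ m)) :=
    ((tendsto_nhdsWithin_of_tendsto_nhds tendsto_id).comp tendsto_fst).pow m
  simpa only [one_mul] using (hfst.isBigO_one ℝ).mul (isBigO_refl (fun p : ℝ × X => D p.2) _)

variable {X Y : Type*} [MeasurableSpace X] [MeasurableSpace Y]

lemma integral_eq_zero_of_odd [AddGroup X] [MeasurableNeg X] {E : Type*} [NormedAddCommGroup E]
    [NormedSpace ℝ E] {μ : Measure X} [μ.IsNegInvariant] {f : X → E} (hf : f.Odd) :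
    ∫ x, f x ∂μ = 0 := by
  have : IsAddTorsionFree E := .of_isTorsionFree ℝ E
  have hneg := integral_neg_eq_self f μ
  simp only [hf.eq, integral_neg] at hneg
  exact self_eq_neg.1 hneg.symm

/-- `F ε x = a x + ε * b x + O(ε² D x)` as `ε → 0⁺`, uniformly in `x`, with an even leading term `a`
and an odd first-order term `b`, both of them `O(D)`. After integration over `x` the first-order
term disappears. -/
structure ParityExpansion [Neg X] (F : ℝ → X → ℂ) (a : X → ℂ) (D : X → ℝ) : Prop where
  measurable (ε : ℝ) : Measurable (F ε)
  measurable_leading : Measurable a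
  even_leading : a.Even
  leading_isBigO : a =O[⊤] D
  exists_firstOrder : ∃ b : X → ℂ, Measurable b ∧ b.Odd ∧ b =O[⊤] D ∧
    (fun p : ℝ × X => F p.1 p.2 - (a p.2 + p.1 * b p.2)) =O[𝓝[>] 0 ×ˢ ⊤] fun p => p.1 ^ 2 * D p.2

namespace ParityExpansion

lemma one [Neg X] : ParityExpansion (1 : ℝ → X → ℂ) 1 1 where
  measurable _ := measurable_const
  measurable_leading := measurable_const
  even_leading := .const 1
  leading_isBigO := .of_norm_left <| by simpa using isBigO_refl (1 : X → ℝ) ⊤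
  exists_firstOrder := ⟨0, measurable_const, .zero, isBigO_zero _ _, by simp [isBigO_zero]⟩

lemma mul [Neg X] {F G : ℝ → X → ℂ} {a a' : X → ℂ} {D D' : X → ℝ} (hF : ParityExpansion F a D)
    (hG : ParityExpansion G a' D') : ParityExpansion (F * G) (a * a') (D * D') := by
  obtain ⟨b, hb, hb_odd, hbD, hFb⟩ := hF.exists_firstOrder
  obtain ⟨b', hb', hb'_odd, hb'D, hGb'⟩ := hG.exists_firstOrder
  refine ⟨fun ε => (hF.measurable ε).mul (hG.measurable ε),
    hF.measurable_leading.mul hG.measurable_leading, hF.even_leading.mul_even hG.even_leading,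
    hF.leading_isBigO.mul hG.leading_isBigO, a * b' + b * a',
    (hF.measurable_leading.mul hb').add (hb.mul hG.measurable_leading),
    (hF.even_leading.mul_odd hb'_odd).add (hb_odd.mul_even hG.even_leading),
    (hF.leading_isBigO.mul hb'D).add (hbD.mul hG.leading_isBigO), ?_⟩
  have hsnd : Tendsto (Prod.snd : ℝ × X → X) (𝓝[>] 0 ×ˢ ⊤) ⊤ := tendsto_snd
  have hfst : (fun p : ℝ × X => (p.1 : ℂ)) =O[𝓝[>] 0 ×ˢ ⊤] fun p => p.1 :=
    Complex.isBigO_ofReal_left.2 (isBigO_refl _ _)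
  have hlin {c d : X → ℂ} {D : X → ℝ} (hc : c =O[⊤] D) (hd : d =O[⊤] D) :
      (fun p : ℝ × X => c p.2 + p.1 * d p.2) =O[𝓝[>] 0 ×ˢ ⊤] fun p => D p.2 :=
    (hc.comp_tendsto hsnd).add ((hfst.mul (hd.comp_tendsto hsnd)).trans
      ((isBigO_fst_pow_mul 1 D).congr_left fun p => by rw [pow_one]; rfl))
  have hGD : (fun p : ℝ × X => G p.1 p.2) =O[𝓝[>] 0 ×ˢ ⊤] fun p => D' p.2 := by
    simpa only [sub_add_cancel] using
      (hGb'.trans (isBigO_fst_pow_mul 2 D')).add (hlin hG.leading_isBigO hb'D)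
  have hFG := (((hFb.mul hGD).congr_right fun p => mul_assoc _ _ _).add
    (((hlin hF.leading_isBigO hbD).mul hGb').congr_right fun p => mul_left_comm _ _ _)).add
    ((hfst.pow 2).mul ((hbD.comp_tendsto hsnd).mul (hb'D.comp_tendsto hsnd)))
  refine hFG.congr_left fun p => ?_
  simp only [Function.comp_apply, Pi.mul_apply, Pi.add_apply]
  ring

lemma prod [Neg X] {ι : Type*} (s : Finset ι) {F : ι → ℝ → X → ℂ} {a : ι → X → ℂ}
    {D : ι → X → ℝ} (hF : ∀ i ∈ s, ParityExpansion (F i) (a i) (D i)) :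
    ParityExpansion (∏ i ∈ s, F i) (∏ i ∈ s, a i) (∏ i ∈ s, D i) := by
  classical
  induction s using Finset.induction_on with
  | empty => exact one
  | insert i s hi ih =>
    simpa only [prod_insert hi] using
      (hF i (mem_insert_self i s)).mul (ih fun j hj => hF j (mem_insert_of_mem hj))

lemma comp_odd [Neg X] [Neg Y] {F : ℝ → Y → ℂ} {a : Y → ℂ} {D : Y → ℝ}
    (hF : ParityExpansion F a D) {w : X → Y} (hw : Measurable w) (hw_odd : w.Odd) :
    ParityExpansion (fun ε => F ε ∘ w) (a ∘ w) (D ∘ w) where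
  measurable ε := (hF.measurable ε).comp hw
  measurable_leading := hF.measurable_leading.comp hw
  even_leading := hF.even_leading.comp_odd hw_odd
  leading_isBigO := hF.leading_isBigO.comp_tendsto tendsto_top
  exists_firstOrder :=
    let ⟨b, hb, hb_odd, hbD, hFb⟩ := hF.exists_firstOrder
    ⟨b ∘ w, hb.comp hw, hb_odd.comp_odd hw_odd, hbD.comp_tendsto tendsto_top,
      hFb.comp_tendsto (k := Prod.map id w) (tendsto_id.prodMap tendsto_top)⟩

lemma isBigO_integral_sub [AddGroup X] [MeasurableNeg X] {μ : Measure X} [μ.IsNegInvariant]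
    {F : ℝ → X → ℂ} {a : X → ℂ} {D : X → ℝ} (hF : ParityExpansion F a D) (hD : Integrable D μ) :
    (fun ε => ∫ x, F ε x ∂μ - ∫ x, a x ∂μ) =O[𝓝[>] 0] fun ε => ε ^ 2 := by
  obtain ⟨b, hb, hb_odd, hbD, hFb⟩ := hF.exists_firstOrder
  obtain ⟨C, hC⟩ := hFb.bound
  have ha := hF.measurable_leading
  have hai : Integrable a μ := (hF.leading_isBigO.mono le_top).integrable ha.aestronglyMeasurable hD
  have hbi : Integrable b μ := (hbD.mono le_top).integrable hb.aestronglyMeasurable hD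
  refine .of_bound (C * ∫ x, ‖D x‖ ∂μ) ?_
  filter_upwards [mem_prod_top.1 hC] with ε hε
  have hbound (x : X) : ‖F ε x - (a x + ε * b x)‖ ≤ C * ε ^ 2 * ‖D x‖ := by
    simpa [abs_mul, mul_assoc] using hε x
  have hlin : Integrable (fun x => a x + ε * b x) μ := hai.add (hbi.const_mul _)
  have hFi : Integrable (F ε) μ := by
    have hR : Integrable (fun x => F ε x - (a x + ε * b x)) μ :=
      (hD.norm.const_mul (C * ε ^ 2)).mono'
        ((hF.measurable ε).sub (ha.add (hb.const_mul _))).aestronglyMeasurable (.of_forall hbound)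
    exact (hR.add hlin).congr (.of_forall fun x => sub_add_cancel _ _)
  calc ‖∫ x, F ε x ∂μ - ∫ x, a x ∂μ‖
      = ‖∫ x, (F ε x - (a x + ε * b x)) ∂μ‖ := by
        rw [integral_sub hFi hlin, integral_add hai (hbi.const_mul _), integral_const_mul,
          integral_eq_zero_of_odd hb_odd, mul_zero, add_zero]
    _ ≤ ∫ x, C * ε ^ 2 * ‖D x‖ ∂μ :=
        norm_integral_le_of_norm_le (hD.norm.const_mul _) (.of_forall hbound)
    _ = C * (∫ x, ‖D x‖ ∂μ) * ‖ε ^ 2‖ := by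
        rw [integral_const_mul, Real.norm_of_nonneg (sq_nonneg ε)]
        ring

end ParityExpansion

end ParityExpansion

section SaddlePoint

open Asymptotics MeasureTheory Topology Complex

section ExpBounds

lemma mul_abs_sub_sq_le_exp_sub_one_sub {s : ℝ} (hs : s ≤ 1) (x : ℝ) :
    s * |x| - s ^ 2 ≤ Real.exp x - 1 - x := by
  rcases le_total (-2) x with hx | hx
  · have hexp : (1 + x / 2) ^ 2 ≤ Real.exp x := by
      rw [← add_halves x, Real.exp_add, ← sq, add_halves]
      exact pow_le_pow_left₀ (by linarith) (by linarith [Real.add_one_le_exp (x / 2)]) 2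
    nlinarith [sq_nonneg (|x| / 2 - s), sq_abs x]
  · rw [abs_of_neg (by linarith)]
    nlinarith [Real.exp_pos x]

lemma norm_exp_sub_one_sub_le (y : ℂ) : ‖cexp y - 1 - y‖ ≤ (1 + ‖cexp y‖) * ‖y‖ ^ 2 := by
  let S : Set ℂ := {z | z.re ≤ max 0 y.re} ∩ Metric.closedBall 0 ‖y‖
  have hS : Convex ℝ S := (convex_halfSpace_re_le _).inter (convex_closedBall _ _)
  have hS0 : (0 : ℂ) ∈ S := by simp [S]
  have hSy : y ∈ S := by simp [S]
  have hexp {z : ℂ} (hz : z ∈ S) : ‖cexp z‖ ≤ 1 + ‖cexp y‖ := by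
    rw [Complex.norm_exp, Complex.norm_exp]
    rcases le_max_iff.1 (show z.re ≤ max 0 y.re from hz.1) with h | h
    · linarith [Real.exp_le_one_iff.2 h, Real.exp_pos y.re]
    · linarith [Real.exp_le_exp.2 h]
  have hexp_sub_one {z : ℂ} (hz : z ∈ S) : ‖cexp z - 1‖ ≤ (1 + ‖cexp y‖) * ‖y‖ := by
    have hmv := hS.norm_image_sub_le_of_norm_hasDerivWithin_le
      (fun w _ => (Complex.hasDerivAt_exp w).hasDerivWithinAt) (fun w => hexp) hS0 hz
    rw [Complex.exp_zero, sub_zero] at hmv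
    refine hmv.trans ?_
    gcongr
    simpa using hz.2
  have hmv := hS.norm_image_sub_le_of_norm_hasDerivWithin_le (f := fun w => cexp w - w)
    (fun w _ => ((Complex.hasDerivAt_exp w).sub (hasDerivAt_id w)).hasDerivWithinAt)
    (fun w => hexp_sub_one) hS0 hSy
  simpa only [Complex.exp_zero, sub_zero, sub_right_comm, mul_assoc, ← sq] using hmv

lemma pow_le_factorial_mul_exp {x : ℝ} (hx : 0 ≤ x) (n : ℕ) :
    x ^ n ≤ n.factorial * Real.exp x :=
  (div_le_iff₀' (by positivity)).1 (Real.pow_div_factorial_le_exp x hx n)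

lemma integrable_exp_neg_abs : Integrable fun x : ℝ => Real.exp (-|x|) := by
  refine .of_integral_ne_zero ?_
  rw [integral_comp_abs (f := fun x => Real.exp (-x)), integral_exp_neg_Ioi_zero]
  norm_num

end ExpBounds

/-- The exponent `-l (e^{εw} - 1 - εw) / ε² + εαw` of the Gamma integrand near its saddle point,
in the variable rescaled by `ε`. Only `ε ≠ 0` is meaningful. -/
noncomputable def saddleExponent (l : ℝ) (α : ℂ) (ε w : ℝ) : ℂ :=
  -((l * (Real.exp (ε * w) - 1 - ε * w) / ε ^ 2 : ℝ) : ℂ) + ε * (α * w)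

/-- The limit `-l w² / 2` of `saddleExponent` as `ε → 0`. -/
noncomputable def gaussianExponent (l w : ℝ) : ℂ := -(l / 2 * w ^ 2 : ℝ)

/-- The coefficient of `ε` in the expansion of `saddleExponent`. -/
noncomputable def firstOrderExponent (l : ℝ) (α : ℂ) (w : ℝ) : ℂ := α * w - l * w ^ 3 / 6

variable {l : ℝ}

lemma norm_exp_saddleExponent_le (hl : 0 < l) (α : ℂ) {m ε : ℝ} (hε : 0 < ε)
    (hε1 : ε ≤ 1) (hεm : ε * ((m + ‖α‖) / l) ≤ 1) (w : ℝ) :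
    ‖cexp (saddleExponent l α ε w)‖ ≤ Real.exp ((m + ‖α‖) ^ 2 / l) * Real.exp (-(m * |w|)) := by
  set c := (m + ‖α‖) / l with hc
  have hlc : l * c = m + ‖α‖ := by rw [hc]; field_simp
  have hlc2 : l * c ^ 2 = (m + ‖α‖) ^ 2 / l := by rw [hc]; field_simp
  have hconvex : l * (c * |w| - c ^ 2) ≤ l * (Real.exp (ε * w) - 1 - ε * w) / ε ^ 2 := by
    rw [le_div_iff₀ (by positivity), mul_assoc]
    refine mul_le_mul_of_nonneg_left ?_ hl.le
    calc (c * |w| - c ^ 2) * ε ^ 2 = ε * c * |ε * w| - (ε * c) ^ 2 := by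
          rw [abs_mul, abs_of_pos hε]
          ring
      _ ≤ _ := mul_abs_sub_sq_le_exp_sub_one_sub hεm _
  have hlinear : ε * (α.re * w) ≤ ‖α‖ * |w| :=
    calc ε * (α.re * w) ≤ ε * (|α.re| * |w|) := by
          rw [← abs_mul]
          gcongr
          exact le_abs_self _
      _ ≤ ε * (‖α‖ * |w|) := by
          gcongr
          exact abs_re_le_norm α
      _ ≤ ‖α‖ * |w| := mul_le_of_le_one_left (by positivity) hε1
  have hre : (saddleExponent l α ε w).re =
      -(l * (Real.exp (ε * w) - 1 - ε * w) / ε ^ 2) + ε * (α.re * w) := by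
    simp only [saddleExponent, add_re, neg_re, ofReal_re, re_ofReal_mul, re_mul_ofReal]
  rw [Complex.norm_exp, ← Real.exp_add, Real.exp_le_exp, hre]
  linear_combination hconvex + hlinear - |w| * hlc + hlc2

lemma norm_exp_gaussianExponent_le (hl : 0 < l) (m w : ℝ) :
    ‖cexp (gaussianExponent l w)‖ ≤ Real.exp (m ^ 2 / (2 * l)) * Real.exp (-(m * |w|)) := by
  rw [Complex.norm_exp, ← Real.exp_add, Real.exp_le_exp, gaussianExponent, neg_re, ofReal_re]
  have hsq : m ^ 2 / (2 * l) - m * |w| + l / 2 * w ^ 2 = (m - l * |w|) ^ 2 / (2 * l) := by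
    rw [← sq_abs w]
    field_simp
    ring
  have hnonneg : 0 ≤ (m - l * |w|) ^ 2 / (2 * l) := by positivity
  linarith

lemma norm_firstOrderExponent_le (hl : 0 < l) (α : ℂ) (w : ℝ) :
    ‖firstOrderExponent l α w‖ ≤ (‖α‖ + l) * Real.exp |w| := by
  have hw := pow_le_factorial_mul_exp (abs_nonneg w) 1
  have hw3 := pow_le_factorial_mul_exp (abs_nonneg w) 3
  norm_num [Nat.factorial] at hw hw3
  calc ‖firstOrderExponent l α w‖ ≤ ‖α‖ * |w| + l * |w| ^ 3 / 6 := by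
        refine (norm_sub_le _ _).trans_eq ?_
        simp [abs_of_pos hl]
    _ ≤ ‖α‖ * Real.exp |w| + l * (6 * Real.exp |w|) / 6 := by gcongr
    _ = (‖α‖ + l) * Real.exp |w| := by ring

lemma norm_saddleExponent_sub_gaussianExponent_sub_le (hl : 0 < l) (α : ℂ) {ε : ℝ} (hε : 0 < ε)
    (hε1 : ε ≤ 1) (w : ℝ) :
    ‖saddleExponent l α ε w - gaussianExponent l w - ε * firstOrderExponent l α w‖ ≤
      24 * l * ε ^ 2 * Real.exp (2 * |w|) := by
  have hremainder : |Real.exp (ε * w) - ∑ m ∈ range 4, (ε * w) ^ m / m.factorial| ≤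
      ε ^ 4 * (24 * Real.exp |w|) * Real.exp |w| := by
    have htaylor := norm_exp_sub_sum_le_norm_mul_exp (ε * w : ℝ) 4
    calc _ ≤ |ε * w| ^ 4 * Real.exp |ε * w| := by exact_mod_cast htaylor
      _ = ε ^ 4 * |w| ^ 4 * Real.exp (ε * |w|) := by rw [abs_mul, mul_pow, abs_of_pos hε]
      _ ≤ ε ^ 4 * (24 * Real.exp |w|) * Real.exp |w| := by
          gcongr
          · exact pow_le_factorial_mul_exp (abs_nonneg w) 4
          · exact mul_le_of_le_one_left (abs_nonneg w) hε1
  have heq : saddleExponent l α ε w - gaussianExponent l w - ε * firstOrderExponent l α w =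
      -(l / ε ^ 2 * (Real.exp (ε * w) - ∑ m ∈ range 4, (ε * w) ^ m / m.factorial) : ℝ) := by
    simp only [saddleExponent, gaussianExponent, firstOrderExponent, sum_range_succ]
    push_cast [Nat.factorial]
    have : (ε : ℂ) ≠ 0 := mod_cast hε.ne'
    field_simp
    ring
  rw [heq, norm_neg, norm_real, Real.norm_eq_abs, abs_mul, abs_of_pos (by positivity)]
  calc _ ≤ l / ε ^ 2 * (ε ^ 4 * (24 * Real.exp |w|) * Real.exp |w|) := by gcongr
    _ = 24 * l * ε ^ 2 * Real.exp (2 * |w|) := by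
        rw [two_mul |w|, Real.exp_add]
        field_simp

lemma norm_saddleExponent_sub_gaussianExponent_le (hl : 0 < l) (α : ℂ) {ε : ℝ} (hε : 0 < ε)
    (hε1 : ε ≤ 1) (w : ℝ) :
    ‖saddleExponent l α ε w - gaussianExponent l w‖ ≤
      ε * (‖α‖ + l + 24 * l) * Real.exp (2 * |w|) := by
  have hexp : Real.exp |w| ≤ Real.exp (2 * |w|) :=
    Real.exp_le_exp.2 (by linarith [abs_nonneg w])
  calc ‖saddleExponent l α ε w - gaussianExponent l w‖
      ≤ ‖saddleExponent l α ε w - gaussianExponent l w - ε * firstOrderExponent l α w‖ +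
        ‖ε * firstOrderExponent l α w‖ := by
        simpa using norm_add_le (saddleExponent l α ε w - gaussianExponent l w -
          ε * firstOrderExponent l α w) (ε * firstOrderExponent l α w)
    _ ≤ 24 * l * (ε * 1) * Real.exp (2 * |w|) + ε * ((‖α‖ + l) * Real.exp (2 * |w|)) := by
        refine add_le_add ((norm_saddleExponent_sub_gaussianExponent_sub_le hl α hε hε1 w).trans ?_)
          ?_
        · rw [sq]
          gcongr
        · rw [norm_mul, norm_real, Real.norm_of_nonneg hε.le]
          gcongr
          exact (norm_firstOrderExponent_le hl α w).trans (by gcongr)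
    _ = ε * (‖α‖ + l + 24 * l) * Real.exp (2 * |w|) := by ring

lemma norm_exp_sub_exp_mul_one_add_le (q q₀ d : ℂ) :
    ‖cexp q - cexp q₀ * (1 + d)‖ ≤
      (‖cexp q₀‖ + ‖cexp q‖) * ‖q - q₀‖ ^ 2 + ‖cexp q₀‖ * ‖q - q₀ - d‖ := by
  have hq : cexp q = cexp q₀ * cexp (q - q₀) := by rw [← Complex.exp_add, add_sub_cancel]
  calc ‖cexp q - cexp q₀ * (1 + d)‖
      = ‖cexp q₀ * (cexp (q - q₀) - 1 - (q - q₀)) + cexp q₀ * (q - q₀ - d)‖ := by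
        rw [hq]
        ring_nf
    _ ≤ ‖cexp q₀‖ * ((1 + ‖cexp (q - q₀)‖) * ‖q - q₀‖ ^ 2) + ‖cexp q₀‖ * ‖q - q₀ - d‖ := by
        refine (norm_add_le _ _).trans ?_
        rw [norm_mul, norm_mul]
        gcongr
        exact norm_exp_sub_one_sub_le _
    _ = _ := by
        rw [hq, norm_mul]
        ring

-- The factor `e^{-5|w|}` absorbs the growth `e^{4|w|}` of the square of the exponent's correction.
lemma exp_saddleExponent_sub_isBigO (hl : 0 < l) (α : ℂ) :
    (fun p : ℝ × ℝ => cexp (saddleExponent l α p.1 p.2) - cexp (gaussianExponent l p.2) *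
      (1 + p.1 * firstOrderExponent l α p.2)) =O[𝓝[>] 0 ×ˢ ⊤]
      fun p => p.1 ^ 2 * Real.exp (-|p.2|) := by
  set K := max (Real.exp ((5 + ‖α‖) ^ 2 / l)) (Real.exp (5 ^ 2 / (2 * l)))
  set P := ‖α‖ + l
  have hεm : ∀ᶠ ε : ℝ in 𝓝[>] 0, ε * ((5 + ‖α‖) / l) ≤ 1 :=
    nhdsWithin_le_nhds <| (continuous_mul_const ((5 + ‖α‖) / l)).tendsto' 0 0 (zero_mul _)
      |>.eventually_le_const one_pos
  refine .of_bound (2 * K * (P + 24 * l) ^ 2 + 24 * K * l) (mem_prod_top.2 ?_)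
  filter_upwards [Ioc_mem_nhdsGT one_pos, hεm] with ε ⟨hε, hε1⟩ hεm w
  have hsaddle : ‖cexp (saddleExponent l α ε w)‖ ≤ K * Real.exp (-(5 * |w|)) :=
    (norm_exp_saddleExponent_le hl α hε hε1 hεm w).trans (by gcongr; exact le_max_left _ _)
  have hgauss : ‖cexp (gaussianExponent l w)‖ ≤ K * Real.exp (-(5 * |w|)) :=
    (norm_exp_gaussianExponent_le hl 5 w).trans (by gcongr; exact le_max_right _ _)
  have hsq : Real.exp (-(5 * |w|)) * Real.exp (2 * |w|) ^ 2 = Real.exp (-|w|) := by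
    rw [← Real.exp_nat_mul, ← Real.exp_add]
    ring_nf
  have hlin : Real.exp (-(5 * |w|)) * Real.exp (2 * |w|) ≤ Real.exp (-|w|) := by
    rw [← Real.exp_add, Real.exp_le_exp]
    linarith [abs_nonneg w]
  calc _ ≤ (K * Real.exp (-(5 * |w|)) + K * Real.exp (-(5 * |w|))) *
          (ε * (P + 24 * l) * Real.exp (2 * |w|)) ^ 2 +
        K * Real.exp (-(5 * |w|)) * (24 * l * ε ^ 2 * Real.exp (2 * |w|)) := by
        refine (norm_exp_sub_exp_mul_one_add_le _ _ _).trans ?_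
        gcongr
        · exact norm_saddleExponent_sub_gaussianExponent_le hl α hε hε1 w
        · exact norm_saddleExponent_sub_gaussianExponent_sub_le hl α hε hε1 w
    _ = 2 * K * (P + 24 * l) ^ 2 * ε ^ 2 * (Real.exp (-(5 * |w|)) * Real.exp (2 * |w|) ^ 2) +
        24 * K * l * ε ^ 2 * (Real.exp (-(5 * |w|)) * Real.exp (2 * |w|)) := by ring
    _ ≤ 2 * K * (P + 24 * l) ^ 2 * ε ^ 2 * Real.exp (-|w|) +
        24 * K * l * ε ^ 2 * Real.exp (-|w|) := by
        rw [hsq]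
        gcongr
    _ = (2 * K * (P + 24 * l) ^ 2 + 24 * K * l) * ‖ε ^ 2 * Real.exp (-|w|)‖ := by
        rw [Real.norm_of_nonneg (by positivity)]
        ring

lemma parityExpansion_exp_saddleExponent (hl : 0 < l) (α : ℂ) :
    ParityExpansion (fun ε w => cexp (saddleExponent l α ε w))
      (fun w => cexp (gaussianExponent l w)) (fun w => Real.exp (-|w|)) := by
  have hgauss (m : ℝ) :
      (fun w => cexp (gaussianExponent l w)) =O[⊤] fun w => Real.exp (-(m * |w|)) :=
    .of_bound (Real.exp (m ^ 2 / (2 * l))) <| .of_forall fun w => by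
      simpa only [Real.norm_eq_abs, Real.abs_exp] using norm_exp_gaussianExponent_le hl m w
  have hfirst : firstOrderExponent l α =O[⊤] fun w => Real.exp |w| :=
    .of_bound (‖α‖ + l) <| .of_forall fun w => by
      simpa only [Real.norm_eq_abs, Real.abs_exp] using norm_firstOrderExponent_le hl α w
  refine ⟨fun ε => ?_, ?_, fun w => ?_, by simpa only [one_mul] using hgauss 1,
    fun w => cexp (gaussianExponent l w) * firstOrderExponent l α w, ?_, fun w => ?_,
    ((hgauss 2).mul hfirst).congr_right fun w => ?_,
    (exp_saddleExponent_sub_isBigO hl α).congr_left fun p => by ring⟩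
  · unfold saddleExponent
    fun_prop
  · unfold gaussianExponent
    fun_prop
  · simp [gaussianExponent]
  · unfold gaussianExponent firstOrderExponent
    fun_prop
  · simp only [gaussianExponent, firstOrderExponent]
    push_cast
    ring_nf
  · rw [← Real.exp_add]
    ring_nf

end SaddlePoint

section HyperplaneSaddle

open Asymptotics MeasureTheory Topology Complex

section GaussianConstant

variable {l : ℝ}

lemma fourierExp_exp_gaussianExponent (hl : 0 < l) (y : ℝ) :
    fourierExp (fun w => cexp (gaussianExponent l w)) y =
      √(2 * Real.pi / l) * cexp (gaussianExponent l⁻¹ y) := by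
  have hl' : (l : ℂ) ≠ 0 := mod_cast hl.ne'
  have hfour := fourierIntegral_gaussian (b := (l / 2 : ℝ)) (by simpa using hl) y
  have hsqrt : ((Real.pi : ℂ) / (l / 2 : ℝ)) ^ (1 / 2 : ℂ) = √(2 * Real.pi / l) := by
    rw [Real.sqrt_eq_rpow, ofReal_cpow (by positivity)]
    push_cast
    congr 1
    field_simp
  have hexp : -(y : ℂ) ^ 2 / (4 * (l / 2 : ℝ)) = gaussianExponent l⁻¹ y := by
    simp only [gaussianExponent]
    push_cast
    field_simp
    ring
  rw [← hsqrt, ← hexp, ← hfour, fourierExp]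
  refine integral_congr_ae (.of_forall fun w => ?_)
  simp only [gaussianExponent]
  push_cast
  ring_nf

lemma integrable_exp_gaussianExponent (hl : 0 < l) :
    Integrable fun w => cexp (gaussianExponent l w) := by
  refine (integrable_cexp_neg_mul_sq (b := (l / 2 : ℝ)) (by simpa using hl)).congr
    (.of_forall fun w => ?_)
  simp [gaussianExponent]

lemma integral_exp_gaussianExponent (hl : 0 < l) :
    ∫ w, cexp (gaussianExponent l w) = √(2 * Real.pi / l) := by
  simpa [fourierExp, gaussianExponent] using fourierExp_exp_gaussianExponent hl 0

end GaussianConstant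

variable {n : ℕ}

/-- The integral of the product of the factors `exp (saddleExponent ..)` over the hyperplane
`∑ j, lam j * w j = 0`, parametrised by `hyperplanePoint`. -/
noncomputable def saddleIntegral (lam : Fin (n + 1) → ℝ) (α : Fin (n + 1) → ℂ) (ε : ℝ) : ℂ :=
  ∫ x : Fin n → ℝ, ∏ j, cexp (saddleExponent (lam j) (α j) ε (hyperplanePoint lam 0 x j))

/-- The Gaussian limit of `saddleIntegral` as `ε → 0`. -/
noncomputable def gaussianIntegral (lam : Fin (n + 1) → ℝ) : ℂ :=
  ∫ x : Fin n → ℝ, ∏ j, cexp (gaussianExponent (lam j) (hyperplanePoint lam 0 x j))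

variable {lam : Fin (n + 1) → ℝ}

-- The hyperplane formula at `T = 0` evaluates the Gaussian integral without any determinant.
lemma two_pi_div_mul_gaussianIntegral (hlam : ∀ j, 0 < lam j) :
    (2 * Real.pi / lam 0 : ℝ) * gaussianIntegral lam =
      ((∏ j, √(2 * Real.pi / lam j)) * √(2 * Real.pi / ∑ j, lam j) : ℝ) := by
  have hfour (j : Fin (n + 1)) := fourierExp_exp_gaussianExponent (hlam j)
  have hcont : Continuous fun w => cexp (gaussianExponent (lam 0) w) := by
    unfold gaussianExponent
    fun_prop
  have hFi : Integrable (fourierExp fun w => cexp (gaussianExponent (lam 0) w)) := by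
    rw [funext (hfour 0)]
    exact (integrable_exp_gaussianExponent (inv_pos.2 (hlam 0))).const_mul _
  have hexp (z : ℝ) : ∑ j, gaussianExponent (lam j)⁻¹ (lam j * z) =
      gaussianExponent (∑ j, lam j) z := by
    simp only [gaussianExponent, sum_neg_distrib, ← ofReal_sum, sum_div, sum_mul]
    congr! 3 with j
    have := (hlam j).ne'
    field_simp
  rw [gaussianIntegral, ← integral_prod_fourierExp_mul_cexp
    (f := fun j w => cexp (gaussianExponent (lam j) w)) (hlam 0) hcont
    (fun j => integrable_exp_gaussianExponent (hlam j)) hFi 0]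
  simp only [hfour, prod_mul_distrib, ← Complex.exp_sum, hexp, ofReal_zero, mul_zero, zero_mul,
    neg_zero, Complex.exp_zero, mul_one, integral_const_mul,
    integral_exp_gaussianExponent (sum_pos (fun j _ => hlam j) univ_nonempty)]
  push_cast
  rfl

lemma gaussianIntegral_ne_zero (hlam : ∀ j, 0 < lam j) : gaussianIntegral lam ≠ 0 := by
  have hsum : 0 < ∑ j, lam j := sum_pos (fun j _ => hlam j) univ_nonempty
  refine right_ne_zero_of_mul (two_pi_div_mul_gaussianIntegral hlam ▸ ofReal_ne_zero.2 ?_)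
  have hprod : 0 < ∏ j, √(2 * Real.pi / lam j) :=
    prod_pos fun j _ => Real.sqrt_pos.2 (div_pos Real.two_pi_pos (hlam j))
  positivity

lemma integrable_prod_exp_neg_abs_hyperplanePoint (T : ℝ) :
    Integrable fun x : Fin n → ℝ => ∏ j, Real.exp (-|hyperplanePoint lam T x j|) := by
  have hdom : Integrable fun x : Fin n → ℝ => ∏ j, Real.exp (-|x j|) :=
    Integrable.fintype_prod fun _ => integrable_exp_neg_abs
  refine hdom.mono' (Finset.measurable_fun_prod _ fun j _ => ?_).aestronglyMeasurable
    (.of_forall fun x => ?_)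
  · have := measurable_hyperplanePoint (lam := lam) T j
    fun_prop
  · rw [Real.norm_of_nonneg (by positivity), Fin.prod_univ_succ]
    exact mul_le_of_le_one_left (by positivity) (by simp)

lemma saddleIntegral_sub_gaussianIntegral_isBigO (hlam : ∀ j, 0 < lam j)
    (α : Fin (n + 1) → ℂ) :
    (fun ε => saddleIntegral lam α ε - gaussianIntegral lam) =O[𝓝[>] 0] fun ε => ε ^ 2 := by
  have hexpansion := ParityExpansion.prod univ fun j _ =>
    (parityExpansion_exp_saddleExponent (hlam j) (α j)).comp_odd
      (measurable_hyperplanePoint (lam := lam) 0 j) fun x => congrFun (hyperplanePoint_neg x) j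
  have hdom : Integrable (∏ j, (fun w => Real.exp (-|w|)) ∘ (hyperplanePoint lam 0 · j)) := by
    simpa only [prod_fn, Function.comp_apply] using integrable_prod_exp_neg_abs_hyperplanePoint 0
  simpa only [prod_apply, Function.comp_apply, saddleIntegral, gaussianIntegral] using
    hexpansion.isBigO_integral_sub hdom

lemma logGammaIntegrand_saddle_add {l : ℝ} (hl : 0 < l) (α : ℂ) (ν w : ℝ) :
    logGammaIntegrand α (Real.exp (-ν / 2) * w + (ν + Real.log l)) =
      logGammaIntegrand α (ν + Real.log l) * cexp (-(Real.exp (ν / 2) * (l * w))) *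
        cexp (saddleExponent l α (Real.exp (-ν / 2)) w) := by
  have hsq : Real.exp (-ν / 2) ^ 2 = (Real.exp ν)⁻¹ := by
    rw [← Real.exp_nat_mul, ← Real.exp_neg]
    ring_nf
  have hmul : Real.exp ν * Real.exp (-ν / 2) = Real.exp (ν / 2) := by
    rw [← Real.exp_add]
    ring_nf
  simp only [logGammaIntegrand, saddleExponent, ← Complex.exp_add, hsq, div_inv_eq_mul,
    Real.exp_add, Real.exp_log hl, ← hmul]
  push_cast
  ring_nf

lemma integral_prod_logGammaIntegrand_hyperplanePoint (hlam : ∀ j, 0 < lam j)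
    (α : Fin (n + 1) → ℂ) (ν : ℝ) :
    ∫ x : Fin n → ℝ, ∏ j, logGammaIntegrand (α j)
        (hyperplanePoint lam (∑ i, lam i * (ν + Real.log (lam i))) x j) =
      Real.exp (-ν / 2) ^ n * (∏ j, logGammaIntegrand (α j) (ν + Real.log (lam j))) *
        saddleIntegral lam α (Real.exp (-ν / 2)) := by
  set ε := Real.exp (-ν / 2)
  set c : Fin (n + 1) → ℝ := fun j => ν + Real.log (lam j)
  set g : (Fin n → ℝ) → ℂ := fun x =>
    ∏ j, logGammaIntegrand (α j) (hyperplanePoint lam (∑ i, lam i * c i) x j)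
  have hg (x : Fin n → ℝ) : g (ε • x + Fin.tail c) =
      (∏ j, logGammaIntegrand (α j) (c j)) *
        ∏ j, cexp (saddleExponent (lam j) (α j) ε (hyperplanePoint lam 0 x j)) := by
    have hplane : ∑ j, (lam j * hyperplanePoint lam 0 x j : ℂ) = 0 := by
      exact_mod_cast congrArg ((↑) : ℝ → ℂ) (sum_mul_hyperplanePoint (hlam 0).ne' 0 x)
    simp only [g, hyperplanePoint_smul_add (hlam 0).ne', Pi.add_apply, Pi.smul_apply, smul_eq_mul,
      c, ε, logGammaIntegrand_saddle_add (hlam _), prod_mul_distrib]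
    rw [← Complex.exp_sum, sum_neg_distrib, ← mul_sum, hplane, mul_zero, neg_zero,
      Complex.exp_zero, mul_one]
  have hscale : ∫ x, g (ε • x + Fin.tail c) = (ε ^ n)⁻¹ • ∫ x, g x := by
    rw [Measure.integral_comp_smul volume (fun x => g (x + Fin.tail c)),
      integral_add_right_eq_self g, Module.finrank_fin_fun, abs_of_pos (by positivity)]
  have hε : (ε : ℂ) ^ n ≠ 0 := pow_ne_zero _ (mod_cast (Real.exp_pos _).ne')
  calc ∫ x, g x = (ε : ℂ) ^ n * ∫ x, g (ε • x + Fin.tail c) := by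
        rw [hscale, real_smul, ofReal_inv, ofReal_pow, mul_inv_cancel_left₀ hε]
    _ = _ := by simp only [hg, integral_const_mul, mul_assoc, c, ε, saddleIntegral]

end HyperplaneSaddle

section LeadingConstant

open Asymptotics Complex Topology

/-- The number `ν` for which the critical point of `∏ j, exp (-e^{u j} + α j * u j)` on the
hyperplane `∑ j, lam j * u j = T` is, to leading order as `T → ∞`, `u j = ν + log (lam j)`. -/
noncomputable def saddleShift {ι : Type*} [Fintype ι] (lam : ι → ℝ) (T : ℝ) : ℝ :=
  (T - ∑ j, lam j * Real.log (lam j)) / ∑ j, lam j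

variable {ι : Type*} [Fintype ι] {lam : ι → ℝ}

lemma sum_mul_saddleShift_add_log (hsum : ∑ j, lam j ≠ 0) (T : ℝ) :
    ∑ j, lam j * (saddleShift lam T + Real.log (lam j)) = T := by
  simp only [mul_add, sum_add_distrib, ← sum_mul, saddleShift, mul_div_cancel₀ _ hsum,
    sub_add_cancel]

lemma tendsto_exp_neg_saddleShift_div_two (hsum : 0 < ∑ j, lam j) :
    Tendsto (fun T => Real.exp (-saddleShift lam T / 2)) atTop (𝓝[>] 0) := by
  refine Real.tendsto_exp_atBot_nhdsGT.comp (Tendsto.atBot_div_const two_pos ?_)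
  exact tendsto_neg_atTop_atBot.comp
    ((tendsto_atTop_add_const_right _ _ tendsto_id).atTop_div_const hsum)

lemma exp_neg_saddleShift_div_two_sq_isBigO (l : Filter ℝ) :
    (fun T => Real.exp (-saddleShift lam T / 2) ^ 2)
      =O[l] fun T => Real.exp (-T / ∑ j, lam j) := by
  have hsq (T : ℝ) : Real.exp (-saddleShift lam T / 2) ^ 2 =
      Real.exp ((∑ j, lam j * Real.log (lam j)) / ∑ j, lam j) * Real.exp (-T / ∑ j, lam j) := by
    rw [← Real.exp_nat_mul, ← Real.exp_add, saddleShift]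
    ring_nf
  simpa only [hsq] using (isBigO_refl _ l).const_mul_left _

lemma exp_mul_saddleShift (hlam : ∀ j, 0 < lam j) (T : ℝ) (c : ℂ) :
    cexp (c * saddleShift lam T) =
      cexp (T * c / (∑ j, lam j : ℝ)) * ∏ j, (lam j : ℂ) ^ (-(lam j * c / (∑ j, lam j : ℝ))) := by
  have hpow (j : ι) : (lam j : ℂ) ^ (-(lam j * c / (∑ j, lam j : ℝ))) =
      cexp (Real.log (lam j) * -(lam j * c / (∑ j, lam j : ℝ))) := by
    rw [cpow_def_of_ne_zero (mod_cast (hlam j).ne'), ofReal_log (hlam j).le]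
  simp only [hpow, ← Complex.exp_sum, ← Complex.exp_add]
  congr 1
  have hsum : ∑ j, (Real.log (lam j) : ℂ) * -(lam j * c / (∑ j, lam j : ℝ)) =
      -(∑ j, (lam j : ℂ) * Real.log (lam j)) * (c / (∑ j, lam j : ℝ)) := by
    rw [neg_mul, sum_mul, ← sum_neg_distrib]
    exact sum_congr rfl fun j _ => by ring
  rw [hsum, saddleShift]
  push_cast
  ring

lemma exp_saddleShift (hlam : ∀ j, 0 < lam j) (T : ℝ) :
    Real.exp (saddleShift lam T) =
      Real.exp (T / ∑ j, lam j) * ∏ j, lam j ^ (-lam j / ∑ j, lam j) := by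
  have hexp := exp_mul_saddleShift hlam T 1
  simp only [one_mul, mul_one, ← neg_div, ← ofReal_neg, ← ofReal_div,
    ← ofReal_cpow (hlam _).le, ← ofReal_exp, ← ofReal_prod, ← ofReal_mul] at hexp
  exact_mod_cast hexp

lemma prod_logGammaIntegrand_add_log (hlam : ∀ j, 0 < lam j) (α : ι → ℂ) (ν : ℝ) :
    ∏ j, logGammaIntegrand (α j) (ν + Real.log (lam j)) =
      cexp (-((∑ j, lam j) * Real.exp ν : ℝ)) * cexp ((∑ j, α j) * ν) *
        ∏ j, (lam j : ℂ) ^ α j := by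
  have hfactor (j : ι) : logGammaIntegrand (α j) (ν + Real.log (lam j)) =
      cexp (-(lam j * Real.exp ν : ℝ)) * cexp (α j * ν) * (lam j : ℂ) ^ α j := by
    rw [logGammaIntegrand, cpow_def_of_ne_zero (mod_cast (hlam j).ne'), ← ofReal_log (hlam j).le,
      Real.exp_add, Real.exp_log (hlam j), ← Complex.exp_add, ← Complex.exp_add]
    congr 1
    push_cast
    ring
  simp only [hfactor, prod_mul_distrib, ← Complex.exp_sum, sum_neg_distrib, ← ofReal_sum, ← sum_mul]

lemma prod_sqrt_two_pi_div_mul_sqrt (hlam : ∀ j, 0 < lam j) :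
    (∏ j, √(2 * Real.pi / lam j)) * √(2 * Real.pi / ∑ j, lam j) =
      (2 * Real.pi) ^ (((Fintype.card ι : ℝ) + 1) / 2) * (∑ j, lam j) ^ (-(1 / 2) : ℝ) *
        ∏ j, lam j ^ (-(1 / 2) : ℝ) := by
  have hsqrt {l : ℝ} (hl : 0 ≤ l) :
      √(2 * Real.pi / l) = (2 * Real.pi) ^ (1 / 2 : ℝ) * l ^ (-(1 / 2) : ℝ) := by
    rw [Real.sqrt_eq_rpow, Real.div_rpow (by positivity) hl, Real.rpow_neg hl, div_eq_mul_inv]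
  have hpi : (2 * Real.pi) ^ (((Fintype.card ι : ℝ) + 1) / 2) =
      ((2 * Real.pi) ^ (1 / 2 : ℝ)) ^ Fintype.card ι * (2 * Real.pi) ^ (1 / 2 : ℝ) := by
    rw [← pow_succ, ← Real.rpow_mul_natCast (by positivity)]
    push_cast
    ring_nf
  rw [hsqrt (sum_nonneg fun j _ => (hlam j).le), hpi]
  simp only [hsqrt (hlam _).le, prod_mul_distrib, prod_const, card_univ]
  ring

lemma integral_prod_Gamma_mul_cexp_saddleShift {n : ℕ} {lam : Fin (n + 1) → ℝ}
    (hlam : ∀ j, 0 < lam j) {α : Fin (n + 1) → ℂ} (hα : ∀ j, 0 < (α j).re) (T : ℝ) :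
    ∫ z : ℝ, (∏ j, Gamma (α j + I * lam j * z)) * cexp (-(I * T * z)) =
      (2 * Real.pi / lam 0 : ℝ) * (Real.exp (-saddleShift lam T / 2) ^ n *
        (∏ j, logGammaIntegrand (α j) (saddleShift lam T + Real.log (lam j))) *
        saddleIntegral lam α (Real.exp (-saddleShift lam T / 2))) := by
  have hsum : 0 < ∑ j, lam j := sum_pos (fun j _ => hlam j) univ_nonempty
  rw [integral_prod_Gamma_mul_cexp (hlam 0) hα, ← integral_prod_logGammaIntegrand_hyperplanePoint
    hlam, sum_mul_saddleShift_add_log hsum.ne']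

lemma leadingConstant_eq {n : ℕ} {lam : Fin (n + 1) → ℝ} (hlam : ∀ j, 0 < lam j)
    (α : Fin (n + 1) → ℂ) (T : ℝ) :
    ((2 * Real.pi) ^ ((((n + 1 : ℕ) : ℝ) + 1) / 2) * (∑ j, lam j) ^ (-(1 / 2) : ℝ) : ℝ) *
        (∏ j, (lam j : ℂ) ^ (-(1 / 2 : ℂ) + α j +
          lam j * ((((n + 1 : ℕ) : ℂ) - 1) / 2 - ∑ j, α j) / (∑ j, lam j : ℝ))) *
        cexp (-((∑ j, lam j) * Real.exp (T / ∑ j, lam j) *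
            ∏ j, lam j ^ (-lam j / ∑ j, lam j) : ℝ) +
          T * (∑ j, α j - (((n + 1 : ℕ) : ℂ) - 1) / 2) / (∑ j, lam j : ℝ)) =
      ((∏ j, √(2 * Real.pi / lam j)) * √(2 * Real.pi / ∑ j, lam j) : ℝ) *
        (Real.exp (-saddleShift lam T / 2) ^ n *
          ∏ j, logGammaIntegrand (α j) (saddleShift lam T + Real.log (lam j))) := by
  set c : ℂ := ∑ j, α j - (((n + 1 : ℕ) : ℂ) - 1) / 2 with hc
  have hpow (j : Fin (n + 1)) : (lam j : ℂ) ^ (-(1 / 2 : ℂ) + α j +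
      lam j * ((((n + 1 : ℕ) : ℂ) - 1) / 2 - ∑ j, α j) / (∑ j, lam j : ℝ)) =
      (lam j ^ (-(1 / 2) : ℝ) : ℝ) * (lam j : ℂ) ^ α j *
        (lam j : ℂ) ^ (-(lam j * c / (∑ j, lam j : ℝ))) := by
    have h0 : (lam j : ℂ) ≠ 0 := mod_cast (hlam j).ne'
    rw [ofReal_cpow (hlam j).le, ← cpow_add _ _ h0, ← cpow_add _ _ h0]
    congr 1
    push_cast [hc]
    ring
  have hshift : (Real.exp (-saddleShift lam T / 2) : ℂ) ^ n *
      cexp ((∑ j, α j) * saddleShift lam T) =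
      cexp (T * c / (∑ j, lam j : ℝ)) *
        ∏ j, (lam j : ℂ) ^ (-(lam j * c / (∑ j, lam j : ℝ))) := by
    rw [← exp_mul_saddleShift hlam, ofReal_exp, ← Complex.exp_nat_mul, ← Complex.exp_add]
    congr 1
    push_cast [hc]
    ring
  have hprod : (Real.exp (-saddleShift lam T / 2) : ℂ) ^ n *
      ∏ j, logGammaIntegrand (α j) (saddleShift lam T + Real.log (lam j)) =
      cexp (-((∑ j, lam j) * Real.exp (saddleShift lam T) : ℝ)) *
        (cexp (T * c / (∑ j, lam j : ℝ)) * ∏ j, (lam j : ℂ) ^ (-(lam j * c / (∑ j, lam j : ℝ)))) *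
        ∏ j, (lam j : ℂ) ^ α j := by
    rw [prod_logGammaIntegrand_add_log hlam, ← hshift]
    ring
  rw [hprod, prod_sqrt_two_pi_div_mul_sqrt hlam, Fintype.card_fin, Complex.exp_add,
    mul_assoc (∑ j, lam j), ← exp_saddleShift hlam]
  simp only [hpow, prod_mul_distrib]
  push_cast
  ring

end LeadingConstant

/-- **Fourier transform of a product of Gamma functions.**
With `Λ = ∑ λⱼ`, `A = ∑ αⱼ` and
`C_k = (2π)^{(k+1)/2} Λ^{−1/2} ∏ λⱼ^{−1/2 + αⱼ + λⱼ((k−1)/2 − A)/Λ}`,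
as `T → +∞`,
`∫ (∏ Γ(αⱼ + iλⱼz)) e^{-iTz} dz
  = C_k exp(−Λ e^{T/Λ} ∏ λⱼ^{−λⱼ/Λ} + T(A − (k−1)/2)/Λ) (1 + O(e^{−T/Λ}))`. -/
theorem fourier_transform_Gamma_prod (k : ℕ) (hk : 1 ≤ k)
    (lam : Fin k → ℝ) (hlam : ∀ j, 0 < lam j)
    (α : Fin k → ℂ) (hα : ∀ j, 0 < (α j).re)
    (Λ : ℝ) (hΛ : Λ = ∑ j, lam j)
    (A : ℂ) (hA : A = ∑ j, α j)
    (Ck : ℂ)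
    (hCk : Ck = (((2 * Real.pi) ^ (((k : ℝ) + 1) / 2) * Λ ^ (-(1 / 2) : ℝ) : ℝ) : ℂ) *
      ∏ j, ((lam j : ℂ) ^
        (-(1 / 2 : ℂ) + α j + (lam j : ℂ) * (((k : ℂ) - 1) / 2 - A) / (Λ : ℂ)))) :
    ∃ E : ℝ → ℂ, (E =O[atTop] fun T : ℝ => Real.exp (-T / Λ)) ∧
      ∀ T : ℝ,
        (∫ z : ℝ, (∏ j, Complex.Gamma (α j + Complex.I * lam j * z)) *
            Complex.exp (-(Complex.I * T * z))) =
          Ck *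
            Complex.exp
              (-((Λ * Real.exp (T / Λ) * ∏ j, lam j ^ (-(lam j) / Λ) : ℝ) : ℂ) +
                (T : ℂ) * (A - ((k : ℂ) - 1) / 2) / (Λ : ℂ)) *
            (1 + E T) := by
  obtain ⟨n, rfl⟩ := Nat.exists_eq_add_of_le' hk
  subst hΛ hA hCk
  have hsum : 0 < ∑ j, lam j := sum_pos (fun j _ => hlam j) univ_nonempty
  have hG : gaussianIntegral lam ≠ 0 := gaussianIntegral_ne_zero hlam
  refine ⟨fun T => (gaussianIntegral lam)⁻¹ *
    (saddleIntegral lam α (Real.exp (-saddleShift lam T / 2)) - gaussianIntegral lam), ?_,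
    fun T => ?_⟩
  · exact (((saddleIntegral_sub_gaussianIntegral_isBigO hlam α).comp_tendsto
      (tendsto_exp_neg_saddleShift_div_two hsum)).trans
        (exp_neg_saddleShift_div_two_sq_isBigO atTop)).const_mul_left _
  · rw [integral_prod_Gamma_mul_cexp_saddleShift hlam hα, leadingConstant_eq hlam,
      ← two_pi_div_mul_gaussianIntegral hlam]
    field_simp
    ring
end

section
/- Let Q > 0, Λ' > 0, B₁ ∈ ℝ, B₂ ∈ ℂ, and let h : ℝ → ℂ be a measurable function with |h(ε)| ≤ K ε² for all |ε| ≤ 1, for some constant K. Then as T → +∞, ∫_{−e^{−T/(3Λ')}}^{e^{−T/(3Λ')}} exp(−ε² Q e^{T/Λ'} (1 + B₁ ε + h(ε)) + B₂ ε) dε = √(π/Q) · e^{−T/(2Λ')} · (1 + O(e^{−T/Λ'})). -/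
open Filter

/-!
Write `N = Q e^{T/Λ'}` and `r = e^{-T/(3Λ')}`, so that `N r³ = Q`. The integrand factors as
`e^{-Nε²} e^{u + v}` with `u = -Nε² B₁ε + B₂ε` odd in `ε` and `v = -Nε² h(ε)`. On `[-r, r]` the
exponent `u + v` stays bounded because `N|ε|³ ≤ Q`, so `e^{u + v} = 1 + u + O(|u + v|² + |v|)`.
The term `u` integrates to zero against the even Gaussian; in the scale `x = Nε²` the remainder is
`N⁻¹` times a polynomial in `x`, which half of the Gaussian absorbs. Extending the interval to `ℝ`
costs only `e^{-Nr²/2}`, which is smaller than any power of `N⁻¹`.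
-/

open MeasureTheory Asymptotics Topology Set

open scoped Nat

/-- The integrand `exp(-Nε²(1 + B₁ε + h(ε)) + B₂ε)`, with the large parameter
`N` standing for the paper's `Q e^{T/Λ'}`. -/
noncomputable def perturbedGaussian (N : ℝ) (B₁ B₂ : ℂ) (h : ℝ → ℂ) (ε : ℝ) : ℂ :=
  Complex.exp (-((ε ^ 2 * N : ℝ) : ℂ) * (1 + B₁ * (ε : ℂ) + h ε) + B₂ * (ε : ℂ))

/-- The part `-Nε² B₁ε + B₂ε` of the exponent that is odd in `ε`: the first-order correction to the
Gaussian, which a symmetric interval does not see. -/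
def oddExponent (N : ℝ) (B₁ B₂ : ℂ) (ε : ℝ) : ℂ :=
  -((ε ^ 2 * N : ℝ) : ℂ) * (B₁ * (ε : ℂ)) + B₂ * (ε : ℂ)

lemma norm_exp_add_sub_one_sub_le (u v : ℂ) :
    ‖Complex.exp (u + v) - 1 - u‖ ≤ ‖u + v‖ ^ 2 * Real.exp ‖u + v‖ + ‖v‖ := by
  have taylor : ‖Complex.exp (u + v) - 1 - (u + v)‖ ≤ ‖u + v‖ ^ 2 * Real.exp ‖u + v‖ := by
    simpa [Finset.sum_range_succ, sub_sub] using
      Complex.norm_exp_sub_sum_le_norm_mul_exp (u + v) 2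
  calc ‖Complex.exp (u + v) - 1 - u‖
      = ‖(Complex.exp (u + v) - 1 - (u + v)) + v‖ := by ring_nf
    _ ≤ ‖Complex.exp (u + v) - 1 - (u + v)‖ + ‖v‖ := norm_add_le _ _
    _ ≤ ‖u + v‖ ^ 2 * Real.exp ‖u + v‖ + ‖v‖ := by gcongr

lemma one_add_pow_mul_exp_neg_le (n : ℕ) {x : ℝ} (hx : -1 ≤ x) :
    (1 + x) ^ n * Real.exp (-x) ≤ 2 ^ n * n ! * Real.exp (1 / 2) * Real.exp (-x / 2) := by
  have hpow : (1 + x) ^ n ≤ 2 ^ n * n ! * Real.exp ((1 + x) / 2) := by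
    have := Real.pow_div_factorial_le_exp ((1 + x) / 2) (by linarith) n
    rwa [div_pow, div_div, div_le_iff₀' (by positivity)] at this
  calc (1 + x) ^ n * Real.exp (-x)
      ≤ 2 ^ n * n ! * Real.exp ((1 + x) / 2) * Real.exp (-x) := by gcongr
    _ = 2 ^ n * n ! * Real.exp (1 / 2) * Real.exp (-x / 2) := by
      rw [mul_assoc, mul_assoc _ (Real.exp (1 / 2)), ← Real.exp_add, ← Real.exp_add]
      ring_nf

lemma isBigO_exp_neg_mul_exp {a c : ℝ} (ha : 0 < a) (hc : 0 < c) (b : ℝ) :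
    (fun T : ℝ => Real.exp (-a * Real.exp (c * T))) =O[atTop] fun T => Real.exp (-(b * T)) := by
  have hexp : Tendsto (fun T : ℝ => Real.exp (c * T)) atTop atTop :=
    Real.tendsto_exp_atTop.comp (tendsto_id.const_mul_atTop hc)
  refine ((isLittleO_exp_neg_mul_rpow_atTop ha (-(b / c))).isBigO.comp_tendsto hexp).congr
    (fun _ => rfl) fun T => ?_
  rw [Function.comp_apply, ← Real.exp_mul]
  congr 1
  field_simp

lemma exp_div_mul_exp_neg_div_three_cube {a : ℝ} (ha : a ≠ 0) (T : ℝ) :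
    Real.exp (T / a) * Real.exp (-T / (3 * a)) ^ 3 = 1 := by
  rw [← Real.exp_nat_mul, ← Real.exp_add, Real.exp_eq_one_iff]
  field_simp
  norm_num

lemma exp_div_mul_exp_neg_div_three_sq {a : ℝ} (ha : a ≠ 0) (T : ℝ) :
    Real.exp (T / a) * Real.exp (-T / (3 * a)) ^ 2 = Real.exp (1 / (3 * a) * T) := by
  rw [← Real.exp_nat_mul, ← Real.exp_add]
  congr 1
  field_simp
  norm_num

lemma sqrt_div_mul_exp (c a T : ℝ) :
    √c * Real.exp (-T / (2 * a)) = √(c / Real.exp (T / a)) := by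
  rw [div_eq_mul_inv c, ← Real.exp_neg, Real.sqrt_mul' _ (Real.exp_pos _).le, ← Real.exp_half]
  congr 2
  ring

section Pointwise

variable {N K ε : ℝ} {B₁ B₂ : ℂ} {h : ℝ → ℂ}

@[fun_prop]
lemma continuous_oddExponent : Continuous (oddExponent N B₁ B₂) := by
  unfold oddExponent
  fun_prop

lemma odd_oddExponent : (oddExponent N B₁ B₂).Odd := fun ε => by
  simp only [oddExponent, even_two.neg_pow, Complex.ofReal_neg]
  ring

lemma perturbedGaussian_eq_exp_mul :
    perturbedGaussian N B₁ B₂ h ε = (Real.exp (-N * ε ^ 2) : ℂ) *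
      Complex.exp (oddExponent N B₁ B₂ ε + -((ε ^ 2 * N : ℝ) : ℂ) * h ε) := by
  rw [perturbedGaussian, oddExponent, Complex.ofReal_exp, ← Complex.exp_add]
  congr 1
  push_cast
  ring

lemma norm_oddExponent_le (hN : 0 ≤ N) :
    ‖oddExponent N B₁ B₂ ε‖ ≤ |ε| * (ε ^ 2 * N * ‖B₁‖ + ‖B₂‖) := by
  refine (norm_add_le _ _).trans_eq ?_
  simp only [norm_mul, norm_neg, Complex.norm_real, Real.norm_eq_abs, abs_pow, sq_abs,
    abs_of_nonneg hN]
  ring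

lemma norm_neg_mul_le_of_norm_le_sq (hN : 0 ≤ N) (hh : ‖h ε‖ ≤ K * ε ^ 2) :
    ‖-((ε ^ 2 * N : ℝ) : ℂ) * h ε‖ ≤ ε ^ 2 * N * (K * ε ^ 2) := by
  rw [norm_mul, norm_neg, Complex.norm_of_nonneg (by positivity)]
  gcongr

lemma norm_oddExponent_add_le (hN : 0 ≤ N) (hK : 0 ≤ K) (hε : |ε| ≤ 1)
    (hh : ‖h ε‖ ≤ K * ε ^ 2) :
    ‖oddExponent N B₁ B₂ ε + -((ε ^ 2 * N : ℝ) : ℂ) * h ε‖ ≤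
      |ε| * (ε ^ 2 * N * (‖B₁‖ + K) + ‖B₂‖) := by
  have hsq : ε ^ 2 ≤ |ε| := by
    simpa only [sq_abs] using pow_le_of_le_one (abs_nonneg ε) hε two_ne_zero
  calc ‖oddExponent N B₁ B₂ ε + -((ε ^ 2 * N : ℝ) : ℂ) * h ε‖
      ≤ |ε| * (ε ^ 2 * N * ‖B₁‖ + ‖B₂‖) + ε ^ 2 * N * (K * ε ^ 2) :=
        norm_add_le_of_le (norm_oddExponent_le hN) (norm_neg_mul_le_of_norm_le_sq hN hh)
    _ ≤ |ε| * (ε ^ 2 * N * ‖B₁‖ + ‖B₂‖) + ε ^ 2 * N * (K * |ε|) := by gcongr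
    _ = |ε| * (ε ^ 2 * N * (‖B₁‖ + K) + ‖B₂‖) := by ring

lemma norm_exp_oddExponent_add_sub_le {M : ℝ} (hN : 0 < N) (hK : 0 ≤ K) (hε : |ε| ≤ 1)
    (hM : N * |ε| ^ 3 ≤ M) (hh : ‖h ε‖ ≤ K * ε ^ 2) :
    ‖Complex.exp (oddExponent N B₁ B₂ ε + -((ε ^ 2 * N : ℝ) : ℂ) * h ε) - 1 -
        oddExponent N B₁ B₂ ε‖ ≤
      ((‖B₁‖ + K + ‖B₂‖) ^ 2 * Real.exp (M * (‖B₁‖ + K) + ‖B₂‖) + K) / N *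
        (1 + ε ^ 2 * N) ^ 3 := by
  set x := ε ^ 2 * N with hx
  set L := ‖B₁‖ + K + ‖B₂‖
  set w := oddExponent N B₁ B₂ ε + -(x : ℂ) * h ε
  have hx₀ : 0 ≤ x := by positivity
  have hw : ‖w‖ ≤ |ε| * (x * (‖B₁‖ + K) + ‖B₂‖) := norm_oddExponent_add_le hN.le hK hε hh
  have hw_bounded : ‖w‖ ≤ M * (‖B₁‖ + K) + ‖B₂‖ :=
    calc ‖w‖ ≤ |ε| * (x * (‖B₁‖ + K) + ‖B₂‖) := hw
      _ = N * |ε| ^ 3 * (‖B₁‖ + K) + |ε| * ‖B₂‖ := by rw [hx, ← sq_abs]; ring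
      _ ≤ M * (‖B₁‖ + K) + 1 * ‖B₂‖ := by gcongr
      _ = M * (‖B₁‖ + K) + ‖B₂‖ := by rw [one_mul]
  have hw_small : ‖w‖ ≤ |ε| * ((1 + x) * L) := by
    refine hw.trans (mul_le_mul_of_nonneg_left ?_ (abs_nonneg ε))
    have : 0 ≤ x * ‖B₂‖ := by positivity
    linarith [norm_nonneg B₁]
  have hεx : ε ^ 2 = x / N := (mul_div_cancel_right₀ _ hN.ne').symm
  calc _ ≤ ‖w‖ ^ 2 * Real.exp ‖w‖ + ‖-(x : ℂ) * h ε‖ := norm_exp_add_sub_one_sub_le _ _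
    _ ≤ (|ε| * ((1 + x) * L)) ^ 2 * Real.exp (M * (‖B₁‖ + K) + ‖B₂‖) + x * (K * ε ^ 2) := by
      gcongr
      exact norm_neg_mul_le_of_norm_le_sq hN.le hh
    _ = (x * (1 + x) ^ 2 * (L ^ 2 * Real.exp (M * (‖B₁‖ + K) + ‖B₂‖)) + x ^ 2 * K) / N := by
      rw [mul_pow, sq_abs, hεx]
      ring
    _ ≤ ((1 + x) ^ 3 * (L ^ 2 * Real.exp (M * (‖B₁‖ + K) + ‖B₂‖)) + (1 + x) ^ 3 * K) / N := by
      have hcube : x * (1 + x) ^ 2 ≤ (1 + x) ^ 3 := by nlinarith [sq_nonneg (1 + x)]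
      have hsq : x ^ 2 ≤ (1 + x) ^ 3 := by nlinarith [pow_nonneg hx₀ 3, pow_nonneg hx₀ 2]
      gcongr
    _ = _ := by ring

lemma exists_norm_perturbedGaussian_sub_le (B₁ B₂ : ℂ) (hK : 0 ≤ K) (M : ℝ) :
    ∃ C, 0 ≤ C ∧ ∀ (N : ℝ) (h : ℝ → ℂ) (ε : ℝ), 0 < N → |ε| ≤ 1 → N * |ε| ^ 3 ≤ M →
      ‖h ε‖ ≤ K * ε ^ 2 →
      ‖perturbedGaussian N B₁ B₂ h ε -
          (Real.exp (-N * ε ^ 2) : ℂ) * (1 + oddExponent N B₁ B₂ ε)‖ ≤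
        C / N * Real.exp (-(N / 2) * ε ^ 2) := by
  set A := (‖B₁‖ + K + ‖B₂‖) ^ 2 * Real.exp (M * (‖B₁‖ + K) + ‖B₂‖) + K
  refine ⟨A * (2 ^ 3 * 3 ! * Real.exp (1 / 2)), by positivity, fun N h ε hN hε hM hh => ?_⟩
  have absorb : (1 + ε ^ 2 * N) ^ 3 * Real.exp (-(ε ^ 2 * N)) ≤
      2 ^ 3 * 3 ! * Real.exp (1 / 2) * Real.exp (-(ε ^ 2 * N) / 2) :=
    one_add_pow_mul_exp_neg_le 3 (neg_one_lt_zero.le.trans (by positivity))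
  rw [perturbedGaussian_eq_exp_mul, ← mul_sub, ← sub_sub, norm_mul,
    Complex.norm_of_nonneg (Real.exp_pos _).le]
  calc _ ≤ Real.exp (-N * ε ^ 2) * (A / N * (1 + ε ^ 2 * N) ^ 3) := by
        gcongr
        exact norm_exp_oddExponent_add_sub_le hN hK hε hM hh
    _ = A / N * ((1 + ε ^ 2 * N) ^ 3 * Real.exp (-(ε ^ 2 * N))) := by ring_nf
    _ ≤ A / N * (2 ^ 3 * 3 ! * Real.exp (1 / 2) * Real.exp (-(ε ^ 2 * N) / 2)) := by gcongr
    _ = _ := by ring_nf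

end Pointwise

section Integrals

variable {N r : ℝ}

lemma intervalIntegral_eq_zero_of_odd {E : Type*} [NormedAddCommGroup E] [NormedSpace ℝ E]
    {f : ℝ → E} (hf : f.Odd) (a : ℝ) : ∫ x in -a..a, f x = 0 := by
  have : IsAddTorsionFree E := .of_isTorsionFree ℝ E
  have hneg : ∫ x in -a..a, f (-x) = ∫ x in -a..a, f x := by simp
  simp only [hf.eq, intervalIntegral.integral_neg] at hneg
  exact self_eq_neg.mp hneg.symm

lemma intervalIntegral_gaussian_le {b s t : ℝ} (hb : 0 < b) (hst : s ≤ t) :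
    ∫ ε in s..t, Real.exp (-b * ε ^ 2) ≤ √(Real.pi / b) := by
  rw [← integral_gaussian, intervalIntegral.integral_of_le hst]
  exact setIntegral_le_integral (integrable_exp_neg_mul_sq hb)
    (ae_of_all _ fun _ => (Real.exp_pos _).le)

-- Outside `[-r, r]`, half of the exponent supplies the small factor; the other is integrated.
lemma abs_intervalIntegral_gaussian_sub_le (hN : 0 < N) (hr : 0 ≤ r) :
    |(∫ ε in -r..r, Real.exp (-N * ε ^ 2)) - √(Real.pi / N)| ≤
      Real.exp (-N * r ^ 2 / 2) * √(Real.pi / (N / 2)) := by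
  have hint := integrable_exp_neg_mul_sq hN
  have hint' := (integrable_exp_neg_mul_sq (half_pos hN)).const_mul (Real.exp (-N * r ^ 2 / 2))
  have tail_le : ∀ ε ∈ (Ioc (-r) r)ᶜ, Real.exp (-N * ε ^ 2) ≤
      Real.exp (-N * r ^ 2 / 2) * Real.exp (-(N / 2) * ε ^ 2) := by
    intro ε hε
    have hrε : r ^ 2 ≤ ε ^ 2 := by
      rw [mem_compl_iff, mem_Ioc, not_and_or, not_lt, not_le] at hε
      rcases hε with hε | hε <;> nlinarith
    rw [← Real.exp_add, Real.exp_le_exp]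
    nlinarith
  have split : (∫ ε in -r..r, Real.exp (-N * ε ^ 2)) - √(Real.pi / N) =
      -∫ ε in (Ioc (-r) r)ᶜ, Real.exp (-N * ε ^ 2) := by
    rw [intervalIntegral.integral_of_le (neg_le_self hr), ← integral_gaussian,
      ← integral_add_compl measurableSet_Ioc hint]
    ring
  rw [split, abs_neg, abs_of_nonneg (integral_nonneg fun _ => (Real.exp_pos _).le)]
  calc ∫ ε in (Ioc (-r) r)ᶜ, Real.exp (-N * ε ^ 2)
      ≤ ∫ ε in (Ioc (-r) r)ᶜ, Real.exp (-N * r ^ 2 / 2) * Real.exp (-(N / 2) * ε ^ 2) :=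
        setIntegral_mono_on hint.integrableOn hint'.integrableOn
          measurableSet_Ioc.compl tail_le
    _ ≤ ∫ ε, Real.exp (-N * r ^ 2 / 2) * Real.exp (-(N / 2) * ε ^ 2) :=
        setIntegral_le_integral hint' (ae_of_all _ fun _ => by positivity)
    _ = Real.exp (-N * r ^ 2 / 2) * √(Real.pi / (N / 2)) := by
        rw [integral_const_mul, integral_gaussian]

lemma intervalIntegral_gaussian_mul_one_add_oddExponent (B₁ B₂ : ℂ) :
    ∫ ε in -r..r, (Real.exp (-N * ε ^ 2) : ℂ) * (1 + oddExponent N B₁ B₂ ε) =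
      ((∫ ε in -r..r, Real.exp (-N * ε ^ 2) : ℝ) : ℂ) := by
  have hodd : (fun ε : ℝ => (Real.exp (-N * ε ^ 2) : ℂ) * oddExponent N B₁ B₂ ε).Odd :=
    fun ε => by simp only [even_two.neg_pow, odd_oddExponent.eq, mul_neg]
  have hcont : Continuous fun ε => (Real.exp (-N * ε ^ 2) : ℂ) * oddExponent N B₁ B₂ ε := by
    fun_prop
  simp only [mul_add, mul_one]
  rw [intervalIntegral.integral_add (Continuous.intervalIntegrable (by fun_prop) _ _)
      (hcont.intervalIntegrable _ _),
    intervalIntegral_eq_zero_of_odd hodd, add_zero, intervalIntegral.integral_ofReal]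

lemma aestronglyMeasurable_perturbedGaussian {B₁ B₂ : ℂ} {h : ℝ → ℂ} {μ : Measure ℝ}
    (hh : AEStronglyMeasurable h μ) :
    AEStronglyMeasurable (perturbedGaussian N B₁ B₂ h) μ := by
  unfold perturbedGaussian
  fun_prop

lemma norm_intervalIntegral_sub_le_of_norm_sub_le {E : Type*} [NormedAddCommGroup E]
    [NormedSpace ℝ E] {f g : ℝ → E} {b : ℝ → ℝ} {s t : ℝ} (hst : s ≤ t)
    (hf : AEStronglyMeasurable f (volume.restrict (Ioc s t)))
    (hg : IntervalIntegrable g volume s t) (hb : IntervalIntegrable b volume s t)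
    (hfg : ∀ x ∈ Ioc s t, ‖f x - g x‖ ≤ b x) :
    ‖(∫ x in s..t, f x) - ∫ x in s..t, g x‖ ≤ ∫ x in s..t, b x := by
  have hsub : IntervalIntegrable (f - g) volume s t := by
    rw [intervalIntegrable_iff_integrableOn_Ioc_of_le hst] at hg hb ⊢
    exact hb.mono' (hf.sub hg.aestronglyMeasurable)
      ((ae_restrict_iff' measurableSet_Ioc).mpr (ae_of_all _ hfg))
  have hf_int : IntervalIntegrable f volume s t := by simpa using hsub.add hg
  rw [← intervalIntegral.integral_sub hf_int hg]
  exact intervalIntegral.norm_integral_le_of_norm_le hst (ae_of_all _ hfg) hb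

lemma exists_norm_integral_perturbedGaussian_sub_le (B₁ B₂ : ℂ) {K : ℝ} (hK : 0 ≤ K) (M : ℝ) :
    ∃ C, ∀ (N r : ℝ) (h : ℝ → ℂ), 0 < N → 0 ≤ r → r ≤ 1 → N * r ^ 3 ≤ M →
      AEStronglyMeasurable h (volume.restrict (Ioc (-r) r)) →
      (∀ ε ∈ Ioc (-r) r, ‖h ε‖ ≤ K * ε ^ 2) →
      ‖(∫ ε in -r..r, perturbedGaussian N B₁ B₂ h ε) - (√(Real.pi / N) : ℂ)‖ ≤
        (C / N + Real.exp (-N * r ^ 2 / 2)) * √(Real.pi / (N / 2)) := by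
  obtain ⟨C, hC, hpointwise⟩ := exists_norm_perturbedGaussian_sub_le B₁ B₂ hK M
  refine ⟨C, fun N r h hN hr hr₁ hM hmeas hh => ?_⟩
  have hrr : -r ≤ r := neg_le_self hr
  have hlocal : ‖(∫ ε in -r..r, perturbedGaussian N B₁ B₂ h ε) -
      ((∫ ε in -r..r, Real.exp (-N * ε ^ 2) : ℝ) : ℂ)‖ ≤ C / N * √(Real.pi / (N / 2)) := by
    rw [← intervalIntegral_gaussian_mul_one_add_oddExponent B₁ B₂]
    calc _ ≤ ∫ ε in -r..r, C / N * Real.exp (-(N / 2) * ε ^ 2) := by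
          refine norm_intervalIntegral_sub_le_of_norm_sub_le hrr
            (aestronglyMeasurable_perturbedGaussian hmeas)
            (Continuous.intervalIntegrable (by fun_prop) _ _)
            (Continuous.intervalIntegrable (by fun_prop) _ _) fun ε hε => ?_
          have hεr : |ε| ≤ r := abs_le.mpr ⟨hε.1.le, hε.2⟩
          exact hpointwise N h ε hN (hεr.trans hr₁)
            ((by gcongr : N * |ε| ^ 3 ≤ N * r ^ 3).trans hM) (hh ε hε)
      _ ≤ C / N * √(Real.pi / (N / 2)) := by
          rw [intervalIntegral.integral_const_mul]
          gcongr
          exact intervalIntegral_gaussian_le (half_pos hN) hrr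
  have htail := abs_intervalIntegral_gaussian_sub_le hN hr
  rw [← Real.norm_eq_abs, ← Complex.norm_real, Complex.ofReal_sub] at htail
  exact (norm_sub_le_norm_sub_add_norm_sub _ _ _).trans
    ((add_le_add hlocal htail).trans_eq (add_mul _ _ _).symm)

end Integrals

section Asymptotics

variable {h : ℝ → ℂ}

theorem isBigO_integral_perturbedGaussian_div_sub_one {ι : Type*} {l : Filter ι} {N r : ι → ℝ}
    (B₁ B₂ : ℂ) (hmeas : StronglyMeasurableAtFilter h (𝓝 0))
    (hh : h =O[𝓝 0] fun ε : ℝ => ε ^ 2) (hN : ∀ᶠ i in l, 0 < N i) (hr : Tendsto r l (𝓝 0))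
    (hr₀ : ∀ᶠ i in l, 0 ≤ r i) (hNr : (fun i => N i * r i ^ 3) =O[l] fun _ => (1 : ℝ))
    (htail : (fun i => Real.exp (-N i * r i ^ 2 / 2)) =O[l] fun i => (N i)⁻¹) :
    (fun i => (∫ ε in -r i..r i, perturbedGaussian (N i) B₁ B₂ h ε) / (√(Real.pi / N i) : ℂ) - 1)
      =O[l] fun i => (N i)⁻¹ := by
  obtain ⟨K, hK, hhK⟩ := hh.exists_nonneg
  obtain ⟨M, hM⟩ := hNr.bound
  obtain ⟨C, hC⟩ := exists_norm_integral_perturbedGaussian_sub_le B₁ B₂ hK M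
  have hIoc : Tendsto (fun i => Ioc (-r i) (r i)) l (𝓝 0).smallSets :=
    .Ioc (by simpa using hr.neg) hr
  have hbound : (fun i => (∫ ε in -r i..r i, perturbedGaussian (N i) B₁ B₂ h ε) /
      (√(Real.pi / N i) : ℂ) - 1) =O[l]
      fun i => √2 * (C * (N i)⁻¹ + Real.exp (-N i * r i ^ 2 / 2)) := by
    refine IsBigO.of_bound' ?_
    filter_upwards [hN, hr₀, hr.eventually_le_const one_pos, hM, hIoc.eventually hmeas.eventually,
      hIoc.eventually hhK.bound.smallSets] with i hN hr₀ hr₁ hM hmeas hh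
    have hsqrt : 0 < √(Real.pi / N i) := Real.sqrt_pos.mpr (div_pos Real.pi_pos hN)
    have hsqrt_two : √(Real.pi / (N i / 2)) = √2 * √(Real.pi / N i) := by
      rw [← Real.sqrt_mul zero_le_two]
      congr 1
      ring
    have key := hC (N i) (r i) h hN hr₀ hr₁ ((le_abs_self _).trans (by simpa using hM)) hmeas
      (by simpa using hh)
    rw [← div_self (Complex.ofReal_ne_zero.mpr hsqrt.ne'), ← sub_div, norm_div,
      Complex.norm_of_nonneg hsqrt.le, div_le_iff₀ hsqrt]
    refine key.trans ((le_of_eq ?_).trans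
      (mul_le_mul_of_nonneg_right (Real.le_norm_self _) hsqrt.le))
    rw [hsqrt_two]
    ring
  exact hbound.trans ((((isBigO_refl _ l).const_mul_left C).add htail).const_mul_left √2)

theorem truncated_gaussian_integral_general {Q Λ' : ℝ} (hQ : 0 < Q) (hΛ' : 0 < Λ') (B₁ B₂ : ℂ)
    (hmeas : StronglyMeasurableAtFilter h (𝓝 0)) (hh : h =O[𝓝 0] fun ε : ℝ => ε ^ 2) :
    ∃ E : ℝ → ℂ, (E =O[atTop] fun T : ℝ => Real.exp (-T / Λ')) ∧
      ∀ T : ℝ,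
        (∫ ε in (-Real.exp (-T / (3 * Λ')))..(Real.exp (-T / (3 * Λ'))),
            Complex.exp (-((ε ^ 2 * Q * Real.exp (T / Λ') : ℝ) : ℂ) *
                (1 + B₁ * (ε : ℂ) + h ε) + B₂ * (ε : ℂ))) =
          ((√(Real.pi / Q) * Real.exp (-T / (2 * Λ')) : ℝ) : ℂ) * (1 + E T) := by
  set N : ℝ → ℝ := fun T => Q * Real.exp (T / Λ') with hN
  set r : ℝ → ℝ := fun T => Real.exp (-T / (3 * Λ')) with hr
  have hN_pos (T : ℝ) : 0 < N T := by positivity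
  have hN_inv (T : ℝ) : (N T)⁻¹ = Q⁻¹ * Real.exp (-T / Λ') := by
    rw [hN, mul_inv, ← Real.exp_neg, neg_div]
  have hr_lim : Tendsto r atTop (𝓝 0) := Real.tendsto_exp_atBot.comp
    (tendsto_neg_atTop_atBot.atBot_div_const (by positivity))
  have hNr_cube (T : ℝ) : N T * r T ^ 3 = Q := by
    rw [hN, hr, mul_assoc, exp_div_mul_exp_neg_div_three_cube hΛ'.ne', mul_one]
  have hNr_sq (T : ℝ) : -N T * r T ^ 2 / 2 = -(Q / 2) * Real.exp (1 / (3 * Λ') * T) := by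
    rw [← exp_div_mul_exp_neg_div_three_sq hΛ'.ne']
    ring
  have htail : (fun T => Real.exp (-N T * r T ^ 2 / 2)) =O[atTop] fun T => (N T)⁻¹ := by
    simp only [hNr_sq, hN_inv, div_eq_inv_mul _ Λ', mul_neg]
    exact (isBigO_exp_neg_mul_exp (half_pos hQ) (by positivity) _).trans
      (isBigO_self_const_mul (inv_pos.mpr hQ).ne' _ _)
  refine ⟨fun T => (∫ ε in -r T..r T, perturbedGaussian (N T) B₁ B₂ h ε) /
    (√(Real.pi / N T) : ℂ) - 1, ?_, fun T => ?_⟩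
  · refine (isBigO_integral_perturbedGaussian_div_sub_one B₁ B₂ hmeas hh (.of_forall hN_pos)
      hr_lim (.of_forall fun T => (Real.exp_pos _).le) ?_ htail).trans ?_
    · simpa only [hNr_cube] using isBigO_const_const Q one_ne_zero atTop
    · simpa only [hN_inv] using isBigO_const_mul_self Q⁻¹ _ atTop
  · have hne : (√(Real.pi / N T) : ℂ) ≠ 0 :=
      Complex.ofReal_ne_zero.mpr (Real.sqrt_pos.mpr (div_pos Real.pi_pos (hN_pos T))).ne'
    rw [sqrt_div_mul_exp, div_div, add_sub_cancel, mul_div_cancel₀ _ hne]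
    simp only [perturbedGaussian, hN, hr, mul_assoc]

end Asymptotics

/-- The truncated Gaussian integral: if `h` is measurable with `|h(ε)| ≤ K ε²` for
`|ε| ≤ 1`, then as `T → +∞`,
`∫_{−e^{−T/(3Λ')}}^{e^{−T/(3Λ')}} exp(−ε² Q e^{T/Λ'} (1 + B₁ε + h(ε)) + B₂ε) dε
  = √(π/Q) e^{−T/(2Λ')} (1 + O(e^{−T/Λ'}))`. -/
theorem truncated_gaussian_integral (Q Λ' : ℝ) (hQ : 0 < Q) (hΛ' : 0 < Λ')
    (B₁ : ℝ) (B₂ : ℂ) (h : ℝ → ℂ) (hmeas : Measurable h)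
    (K : ℝ) (hK : ∀ ε : ℝ, |ε| ≤ 1 → ‖h ε‖ ≤ K * ε ^ 2) :
    ∃ E : ℝ → ℂ, (E =O[atTop] fun T : ℝ => Real.exp (-T / Λ')) ∧
      ∀ T : ℝ,
        (∫ ε in (-Real.exp (-T / (3 * Λ')))..(Real.exp (-T / (3 * Λ'))),
            Complex.exp (-((ε ^ 2 * Q * Real.exp (T / Λ') : ℝ) : ℂ) *
                (1 + (B₁ : ℂ) * (ε : ℂ) + h ε) + B₂ * (ε : ℂ))) =
          ((Real.sqrt (Real.pi / Q) * Real.exp (-T / (2 * Λ')) : ℝ) : ℂ) * (1 + E T) := by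
  have hh : h =O[𝓝 0] fun ε : ℝ => ε ^ 2 :=
    .of_bound K ((eventually_abs_sub_lt 0 one_pos).mono fun ε hε => by
      simpa using hK ε (by simpa using hε.le))
  exact truncated_gaussian_integral_general hQ hΛ' B₁ B₂
    hmeas.aestronglyMeasurable.stronglyMeasurableAtFilter hh
end

section
/- Let a > 0, b ∈ ℝ, and for each integer n ≥ 1 let w_n be the unique positive solution of a·w_n·e^{w_n} = b·w_n + 2n. Then w_n ∼ log(2n/a) − log log(2n/a) as n → ∞; that is, lim_{n→∞} w_n / (log(2n/a) − log log(2n/a)) = 1. -/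
open Filter

/-!
Divided by `a`, the equation reads `w e^w - c w = x` with `c = b / a` and `x = 2n / a`. As a
function of `w`, the left-hand side is continuous, hence bounded on compact intervals; since `w` is
bounded below, `x → ∞` forces `w → ∞`. The left-hand side is also equivalent to `w e^w`, so its
logarithm is equivalent to `w + log w ∼ w`, which gives `w ∼ log x`. Finally `log log x` is
negligible against `log x`.
-/

open Asymptotics Topology

theorem tendsto_atTop_of_continuous_of_tendsto_comp {ι X Y : Type*}
    [LinearOrder X] [TopologicalSpace X] [CompactIccSpace X]
    [LinearOrder Y] [TopologicalSpace Y] [ClosedIciTopology Y] [Nonempty Y] [NoMaxOrder Y]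
    {l : Filter ι} {f : X → Y} {w : ι → X} (hf : Continuous f)
    (hw : l.IsBoundedUnder (· ≥ ·) w) (hfw : Tendsto (fun i => f (w i)) l atTop) :
    Tendsto w l atTop := by
  obtain ⟨m, hm⟩ := hw.eventually_ge
  refine tendsto_atTop.2 fun M => ?_
  obtain ⟨C, hC⟩ := (isCompact_Icc (a := m) (b := M)).bddAbove_image hf.continuousOn
  filter_upwards [hm, hfw.eventually_gt_atTop C] with i hmi hCi
  by_contra! hiM
  exact hCi.not_ge (hC ⟨w i, ⟨hmi, hiM.le⟩, rfl⟩)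

theorem isEquivalent_mul_exp_sub_mul (c : ℝ) :
    (fun y : ℝ => y * Real.exp y - c * y) ~[atTop] fun y => y * Real.exp y := by
  have h_const : (fun _ : ℝ => c) =o[atTop] Real.exp :=
    isLittleO_const_left.2 (.inr (tendsto_norm_atTop_atTop.comp Real.tendsto_exp_atTop))
  exact IsEquivalent.refl.sub_isLittleO
    (((isBigO_refl id atTop).mul_isLittleO h_const).congr_left fun y => mul_comm y c)

theorem isEquivalent_log_mul_exp : (fun y : ℝ => Real.log (y * Real.exp y)) ~[atTop] id := by
  refine (IsEquivalent.refl.add_isLittleO Real.isLittleO_log_id_atTop).congr_left ?_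
  filter_upwards [eventually_gt_atTop 0] with y hy
  rw [Real.log_mul hy.ne' (Real.exp_ne_zero y), Real.log_exp, Pi.add_apply, id, add_comm]

theorem isEquivalent_log_mul_exp_sub_mul (c : ℝ) :
    (fun y : ℝ => Real.log (y * Real.exp y - c * y)) ~[atTop] id :=
  ((isEquivalent_mul_exp_sub_mul c).log (tendsto_id.atTop_mul_atTop₀ Real.tendsto_exp_atTop)).trans
    isEquivalent_log_mul_exp

theorem isEquivalent_log_of_mul_exp_sub_mul_eq {ι : Type*} {l : Filter ι} {c : ℝ} {w x : ι → ℝ}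
    (hx : Tendsto x l atTop) (hw : l.IsBoundedUnder (· ≥ ·) w)
    (hwx : ∀ᶠ i in l, w i * Real.exp (w i) - c * w i = x i) :
    w ~[l] fun i => Real.log (x i) := by
  have hw_top : Tendsto w l atTop :=
    tendsto_atTop_of_continuous_of_tendsto_comp (f := fun y => y * Real.exp y - c * y)
      (by fun_prop) hw (hx.congr' (hwx.mono fun _ h => h.symm))
  refine (((isEquivalent_log_mul_exp_sub_mul c).comp_tendsto hw_top).congr_left ?_).symm
  exact hwx.mono fun i h => congrArg Real.log h

theorem isEquivalent_sub_log {ι : Type*} {l : Filter ι} {u : ι → ℝ} (hu : Tendsto u l atTop) :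
    (fun i => u i - Real.log (u i)) ~[l] u :=
  IsEquivalent.refl.sub_isLittleO (Real.isLittleO_log_id_atTop.comp_tendsto hu)

theorem saddle_asymptotics_general {ι : Type*} {l : Filter ι} {a b : ℝ} (ha : 0 < a)
    {w t : ι → ℝ} (ht : Tendsto t l atTop) (hw : l.IsBoundedUnder (· ≥ ·) w)
    (hwt : ∀ᶠ i in l, a * w i * Real.exp (w i) = b * w i + t i) :
    Tendsto (fun i => w i / (Real.log (t i / a) - Real.log (Real.log (t i / a)))) l (𝓝 1) := by
  have hx : Tendsto (fun i => t i / a) l atTop := ht.atTop_div_const ha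
  have hlog : Tendsto (fun i => Real.log (t i / a)) l atTop := Real.tendsto_log_atTop.comp hx
  have hw_log : w ~[l] fun i => Real.log (t i / a) := by
    refine isEquivalent_log_of_mul_exp_sub_mul_eq (c := b / a) hx hw (hwt.mono fun i h => ?_)
    field_simp
    linarith
  have hden := isEquivalent_sub_log hlog
  have hden_ne := (hden.symm.tendsto_atTop hlog).eventually_ne_atTop 0
  exact (isEquivalent_iff_tendsto_one hden_ne).1 (hw_log.trans hden.symm)

/-- If `wₙ` is the unique positive solution of `a wₙ e^{wₙ} = b wₙ + 2n`, then
`wₙ ∼ log(2n/a) − log log(2n/a)` as `n → ∞`. -/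
theorem saddle_asymptotics (a b : ℝ) (ha : 0 < a) (w : ℕ → ℝ)
    (hw : ∀ n : ℕ, 1 ≤ n → 0 < w n ∧
      a * w n * Real.exp (w n) = b * w n + 2 * (n : ℝ)) :
    Tendsto
      (fun n : ℕ =>
        w n / (Real.log (2 * (n : ℝ) / a) - Real.log (Real.log (2 * (n : ℝ) / a))))
      atTop (nhds 1) :=
  saddle_asymptotics_general ha (tendsto_natCast_atTop_atTop.const_mul_atTop two_pos)
    (isBoundedUnder_of_eventually_ge ((eventually_ge_atTop 1).mono fun n hn => (hw n hn).1.le))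
    ((eventually_ge_atTop 1).mono fun n hn => (hw n hn).2)
end

section
/- Let a > 0, b ∈ ℝ, Λ > 0 and β > 0. For each integer n ≥ 1 let w_n be the unique positive solution of a·w_n·e^{w_n} = b·w_n + 2n, and set A_n = (−1)^n exp(a e^{w_n} − b w_n) √n / (2β Λ^{2n} w_n^{2n+1/2} √π). Then A_n → 0 as n → ∞. -/
open Filter

/-!
The point `wₙ` is the positive critical point of `x ↦ a eˣ - b x - 2n log x`, and it tends to
infinity. For large `n` the factor `a e^{wₙ} - b = 2n / wₙ` is at least `1`, so `wₙ ≤ 2n`, and hence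
`a e^{wₙ} - b wₙ = b + 2n / wₙ - b wₙ = O(n)`. Since `√n / Λ^{2n}` is `e^{O(n)}` as well, `Aₙ` is,
up to sign and a constant, `e^{O(n)} / wₙ^{2n + 1/2}`, and the denominator grows faster than every
exponential because `wₙ → ∞`.
-/

section Asymptotics

open Asymptotics Set Topology

variable {ι : Type*} {l : Filter ι}

theorem tendsto_atTop_of_tendsto_comp_of_continuousOn_Ici {α γ : Type*}
    [LinearOrder α] [TopologicalSpace α] [CompactIccSpace α]
    [LinearOrder γ] [TopologicalSpace γ] [ClosedIciTopology γ] [Nonempty γ] [NoMaxOrder γ]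
    {g : α → γ} {c : α} {w : ι → α} (hg : ContinuousOn g (Ici c)) (hw : ∀ᶠ i in l, c ≤ w i)
    (hgw : Tendsto (fun i ↦ g (w i)) l atTop) : Tendsto w l atTop := by
  refine tendsto_atTop.2 fun M ↦ ?_
  obtain ⟨B, hB⟩ := isCompact_Icc.bddAbove_image (hg.mono (Icc_subset_Ici_self : Icc c M ⊆ Ici c))
  filter_upwards [hw, hgw.eventually_gt_atTop B] with i hci hBi
  by_contra! hiM
  exact hBi.not_ge (hB (mem_image_of_mem g ⟨hci, hiM.le⟩))

theorem tendsto_exp_div_rpow_nhds_zero {f t w : ι → ℝ} (hf : f =O[l] t)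
    (ht : Tendsto t l atTop) (hw : Tendsto w l atTop) :
    Tendsto (fun i ↦ Real.exp (f i) / w i ^ t i) l (𝓝 0) := by
  obtain ⟨C, hC⟩ := hf.bound
  have hexponent : Tendsto (fun i ↦ t i * (Real.log (w i) - C)) l atTop :=
    ht.atTop_mul_atTop₀ (tendsto_atTop_add_const_right l (-C) (Real.tendsto_log_atTop.comp hw))
  refine squeeze_zero' ?_ ?_ (Real.tendsto_exp_neg_atTop_nhds_zero.comp hexponent)
  · filter_upwards [hw.eventually_gt_atTop 0] with i hwi
    positivity
  filter_upwards [hC, ht.eventually_ge_atTop 0, hw.eventually_gt_atTop 0] with i hfi hti hwi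
  have hfi' : f i ≤ C * t i := by
    simpa only [Real.norm_of_nonneg hti] using (Real.le_norm_self (f i)).trans hfi
  calc Real.exp (f i) / w i ^ t i = Real.exp (f i - Real.log (w i) * t i) := by
        rw [Real.rpow_def_of_pos hwi, Real.exp_sub]
    _ ≤ Real.exp (-(t i * (Real.log (w i) - C))) := by
        gcongr
        linarith

section CriticalPoint

variable {a b : ℝ} {t w : ι → ℝ}

theorem tendsto_atTop_of_mul_exp_eq (ht : Tendsto t l atTop) (hw : ∀ᶠ i in l, 0 ≤ w i)
    (heq : ∀ᶠ i in l, a * w i * Real.exp (w i) = b * w i + t i) : Tendsto w l atTop := by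
  refine tendsto_atTop_of_tendsto_comp_of_continuousOn_Ici
    (g := fun x ↦ a * x * Real.exp x - b * x) (by fun_prop) hw (ht.congr' ?_)
  filter_upwards [heq] with i hi
  linarith

theorem isBigO_of_mul_exp_eq (ha : 0 < a) (hw : Tendsto w l atTop)
    (heq : ∀ᶠ i in l, a * w i * Real.exp (w i) = b * w i + t i) : w =O[l] t := by
  have hfactor : Tendsto (fun i ↦ a * Real.exp (w i) - b) l atTop :=
    tendsto_atTop_add_const_right l (-b) ((Real.tendsto_exp_atTop.comp hw).const_mul_atTop ha)
  refine IsBigO.of_norm_eventuallyLE ?_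
  filter_upwards [heq, hw.eventually_ge_atTop 0, hfactor.eventually_ge_atTop 1] with i hi hwi h1
  calc ‖w i‖ = w i := Real.norm_of_nonneg hwi
    _ ≤ w i * (a * Real.exp (w i) - b) := le_mul_of_one_le_right hwi h1
    _ = t i := by linarith

theorem isBigO_mul_exp_sub_mul_of_mul_exp_eq (ha : 0 < a) (ht : Tendsto t l atTop)
    (hw : Tendsto w l atTop) (heq : ∀ᶠ i in l, a * w i * Real.exp (w i) = b * w i + t i) :
    (fun i ↦ a * Real.exp (w i) - b * w i) =O[l] t := by
  have hconst : (fun _ ↦ b) =O[l] t := (isLittleO_const_id_atTop b).isBigO.comp_tendsto ht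
  have hquot : (fun i ↦ t i / w i) =O[l] t := by
    simpa only [div_eq_mul_inv, mul_one, Function.comp_apply] using
      (isBigO_refl t l).mul ((tendsto_inv_atTop_zero.comp hw).isBigO_one ℝ)
  have hlin : (fun i ↦ b * w i) =O[l] t := (isBigO_of_mul_exp_eq ha hw heq).const_mul_left b
  refine ((hconst.add hquot).sub hlin).congr' ?_ .rfl
  filter_upwards [heq, hw.eventually_gt_atTop 0] with i hi hwi
  field_simp
  linarith

end CriticalPoint

theorem isBigO_mul_log_sub_mul_id (c d : ℝ) :
    (fun x ↦ c * Real.log x - d * x) =O[atTop] (id : ℝ → ℝ) :=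
  (Real.isLittleO_log_id_atTop.isBigO.const_mul_left c).sub
    ((isBigO_refl id atTop).const_mul_left d)

theorem tendsto_exp_mul_rpow_div_rpow_mul_rpow_nhds_zero {f s w : ι → ℝ} {k r : ℝ} (c p : ℝ)
    (hk : 0 < k) (hr : 0 < r) (hf : f =O[l] s) (hs : Tendsto s l atTop)
    (hw : Tendsto w l atTop) :
    Tendsto (fun i ↦ Real.exp (f i) * s i ^ p / (r ^ (k * s i) * w i ^ (k * s i + c))) l
      (𝓝 0) := by
  let g : ι → ℝ := fun i ↦ f i + (p * Real.log (s i) - k * Real.log r * s i)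
  have hks : Tendsto (fun i ↦ k * s i) l atTop := hs.const_mul_atTop hk
  have hgs : g =O[l] s :=
    hf.add ((isBigO_mul_log_sub_mul_id p (k * Real.log r)).comp_tendsto hs)
  have hsk : s =O[l] fun i ↦ k * s i + c :=
    ((isBigO_refl s l).const_mul_right hk.ne').trans
      (IsEquivalent.refl.add_const_of_norm_tendsto_atTop
        (tendsto_norm_atTop_atTop.comp hks)).isBigO_symm
  refine (tendsto_exp_div_rpow_nhds_zero (hgs.trans hsk)
    (tendsto_atTop_add_const_right l c hks) hw).congr' ?_
  filter_upwards [hs.eventually_gt_atTop 0] with i hsi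
  have hexp : Real.exp (g i) = Real.exp (f i) * (s i ^ p / r ^ (k * s i)) := by
    rw [Real.rpow_def_of_pos hsi, Real.rpow_def_of_pos hr, ← Real.exp_sub, ← Real.exp_add]
    congr 1
    ring
  rw [hexp, ← mul_div_assoc, div_div]

end Asymptotics

/-- With `wₙ` the unique positive solution of `a wₙ e^{wₙ} = b wₙ + 2n` and
`Aₙ = (−1)ⁿ exp(a e^{wₙ} − b wₙ) √n / (2β Λ^{2n} wₙ^{2n+1/2} √π)`, we have `Aₙ → 0`
as `n → ∞`. -/
theorem An_tendsto_zero (a b Λ β : ℝ) (ha : 0 < a) (hΛ : 0 < Λ) (hβ : 0 < β)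
    (w : ℕ → ℝ)
    (hw : ∀ n : ℕ, 1 ≤ n → 0 < w n ∧
      a * w n * Real.exp (w n) = b * w n + 2 * (n : ℝ))
    (A : ℕ → ℝ)
    (hA : ∀ n : ℕ, A n = (-1) ^ n * Real.exp (a * Real.exp (w n) - b * w n) *
      Real.sqrt n /
      (2 * β * Λ ^ (2 * n) * w n ^ (2 * (n : ℝ) + 1 / 2) * Real.sqrt Real.pi)) :
    Tendsto A atTop (nhds 0) := by
  have hcast : Tendsto (fun n : ℕ ↦ (n : ℝ)) atTop atTop := tendsto_natCast_atTop_atTop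
  have ht : Tendsto (fun n : ℕ ↦ 2 * (n : ℝ)) atTop atTop := hcast.const_mul_atTop two_pos
  have hnonneg : ∀ᶠ n in atTop, 0 ≤ w n :=
    (eventually_ge_atTop 1).mono fun n hn ↦ (hw n hn).1.le
  have heq : ∀ᶠ n : ℕ in atTop, a * w n * Real.exp (w n) = b * w n + 2 * (n : ℝ) :=
    (eventually_ge_atTop 1).mono fun n hn ↦ (hw n hn).2
  have hwtop : Tendsto w atTop atTop := tendsto_atTop_of_mul_exp_eq ht hnonneg heq
  have hexponent : (fun n ↦ a * Real.exp (w n) - b * w n) =O[atTop] fun n : ℕ ↦ (n : ℝ) :=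
    (isBigO_mul_exp_sub_mul_of_mul_exp_eq ha ht hwtop heq).of_const_mul_right
  have hlim := tendsto_exp_mul_rpow_div_rpow_mul_rpow_nhds_zero
    (1 / 2) (1 / 2) two_pos hΛ hexponent hcast hwtop
  refine (bdd_le_mul_tendsto_zero' (f := fun n ↦ (-1) ^ n / (2 * β * √Real.pi))
    (1 / (2 * β * √Real.pi)) (.of_forall fun n ↦ ?_) hlim).congr fun n ↦ ?_
  · rw [abs_div, abs_neg_one_pow, abs_of_pos (by positivity)]
  · rw [hA, Real.sqrt_eq_rpow n, ← Real.rpow_natCast Λ]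
    push_cast
    ring
end

section
/- Let δ ≥ 0, c > 0, Λ > 0, β ∈ ℝ, and let (a_n)_{n≥1} be complex numbers with |a_n| ≤ K n^{δ} for all n and some constant K. Then as x → +∞, ∑_{n=2}^∞ |a_n| n^{−1/2} exp(−c n^{1/Λ} e^{x/Λ} + βx) = O(exp(−c·2^{1/Λ} e^{x/Λ} + βx)); in particular, the tail over n ≥ 2 is exponentially smaller than e^{−x/Λ}·exp(−c e^{x/Λ} + βx), the size of the error term coming from the n = 1 term. -/
open Filter

/-! For `t ≥ t₀` and `μ ≤ μ₀` we have `exp (μ t) ≤ exp (μ t₀) exp (μ₀ (t - t₀))`, so an exponential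
sum whose exponents are at most `μ₀` is `O(exp (μ₀ t))` as soon as it converges absolutely at one
point `t₀`. Here `μ n = -c n^{1/Λ}` is largest at the first term, `t = exp (x / Λ)`, and at `t₀ = 1`
the stretched exponential `exp (-c n^{1/Λ})` beats every power of `n`. -/

open Asymptotics

theorem isBigO_tsum_exp_mul_smul {ι E : Type*} [SeminormedAddCommGroup E] [NormedSpace ℝ E]
    {μ : ι → ℝ} {b : ι → E} {μ₀ t₀ : ℝ} (hμ : ∀ i, μ i ≤ μ₀)
    (hb : Summable fun i => ‖Real.exp (μ i * t₀) • b i‖) :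
    (fun t : ℝ => ∑' i, Real.exp (μ i * t) • b i) =O[atTop] fun t => Real.exp (μ₀ * t) := by
  refine .of_bound ((∑' i, ‖Real.exp (μ i * t₀) • b i‖) * Real.exp (-(μ₀ * t₀))) ?_
  filter_upwards [eventually_ge_atTop t₀] with t ht
  rw [Real.norm_of_nonneg (Real.exp_pos _).le, mul_assoc, ← Real.exp_add]
  refine tsum_of_norm_bounded (hb.hasSum.mul_right _) fun i => ?_
  have hexponent : μ i * t ≤ μ i * t₀ + (-(μ₀ * t₀) + μ₀ * t) := by
    linarith [mul_le_mul_of_nonneg_right (hμ i) (sub_nonneg.mpr ht)]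
  calc ‖Real.exp (μ i * t) • b i‖
      = Real.exp (μ i * t) * ‖b i‖ := by rw [norm_smul, Real.norm_of_nonneg (Real.exp_pos _).le]
    _ ≤ Real.exp (μ i * t₀ + (-(μ₀ * t₀) + μ₀ * t)) * ‖b i‖ := by gcongr
    _ = ‖Real.exp (μ i * t₀) • b i‖ * Real.exp (-(μ₀ * t₀) + μ₀ * t) := by
      rw [norm_smul, Real.norm_of_nonneg (Real.exp_pos _).le, Real.exp_add, mul_right_comm]

theorem isLittleO_exp_neg_mul_rpow_rpow_atTop {c p : ℝ} (hc : 0 < c) (hp : 0 < p) (s : ℝ) :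
    (fun x : ℝ => Real.exp (-c * x ^ p)) =o[atTop] fun x => x ^ s := by
  refine ((isLittleO_exp_neg_mul_rpow_atTop hc (s / p)).comp_tendsto
    (tendsto_rpow_atTop hp)).congr' .rfl ?_
  filter_upwards [eventually_ge_atTop 0] with x hx
  rw [Function.comp_apply, ← Real.rpow_mul hx, mul_div_cancel₀ s hp.ne']

theorem summable_mul_exp_neg_mul_rpow {b : ℕ → ℝ} {c p r : ℝ} (hc : 0 < c) (hp : 0 < p)
    (hb : b =O[atTop] fun n : ℕ => (n : ℝ) ^ r) :
    Summable fun n : ℕ => b n * Real.exp (-c * (n : ℝ) ^ p) := by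
  have hexp : (fun n : ℕ => Real.exp (-c * (n : ℝ) ^ p)) =O[atTop]
      fun n : ℕ => (n : ℝ) ^ (-2 - r) :=
    (isLittleO_exp_neg_mul_rpow_rpow_atTop hc hp _).isBigO.comp_tendsto
      tendsto_natCast_atTop_atTop
  refine summable_of_isBigO_nat (Real.summable_nat_rpow.mpr (by norm_num : (-2 : ℝ) < -1))
    ((hb.mul hexp).congr' .rfl ?_)
  filter_upwards [eventually_gt_atTop 0] with n hn
  rw [← Real.rpow_add (Nat.cast_pos.mpr hn), add_sub_cancel]

theorem dirichlet_tail_bound_general {E : Type*} [SeminormedAddCommGroup E] {a : ℕ → E}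
    {c Λ δ : ℝ} (hc : 0 < c) (hΛ : 0 < Λ) (ha : a =O[atTop] fun n : ℕ => (n : ℝ) ^ δ)
    (s β : ℝ) (N : ℕ) :
    (fun x : ℝ =>
        ∑' n : ℕ, ‖a (n + N)‖ * ((n + N : ℕ) : ℝ) ^ s *
          Real.exp (-c * ((n + N : ℕ) : ℝ) ^ (1 / Λ) * Real.exp (x / Λ) + β * x))
      =O[atTop] fun x : ℝ =>
        Real.exp (-c * (N : ℝ) ^ (1 / Λ) * Real.exp (x / Λ) + β * x) := by
  have hp : 0 < 1 / Λ := one_div_pos.mpr hΛ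
  have hcoeff : (fun n : ℕ => ‖a n‖ * (n : ℝ) ^ s) =O[atTop] fun n : ℕ => (n : ℝ) ^ (δ + s) := by
    refine (ha.norm_left.mul (isBigO_refl _ _)).congr' .rfl ?_
    filter_upwards [eventually_gt_atTop 0] with n hn
    rw [Real.rpow_add (Nat.cast_pos.mpr hn)]
  have hsummable : Summable fun n : ℕ => ‖Real.exp (-c * ((n + N : ℕ) : ℝ) ^ (1 / Λ) * 1) •
      (‖a (n + N)‖ * ((n + N : ℕ) : ℝ) ^ s)‖ := by
    simpa only [mul_one, smul_eq_mul, mul_comm (Real.exp _)] using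
      ((summable_nat_add_iff N).mpr (summable_mul_exp_neg_mul_rpow hc hp hcoeff)).norm
  have hexponent (n : ℕ) : -c * ((n + N : ℕ) : ℝ) ^ (1 / Λ) ≤ -c * (N : ℝ) ^ (1 / Λ) :=
    mul_le_mul_of_nonpos_left (by gcongr; exact Nat.le_add_left N n) (neg_nonpos.mpr hc.le)
  have hsubst : Tendsto (fun x : ℝ => Real.exp (x / Λ)) atTop atTop :=
    Real.tendsto_exp_atTop.comp (tendsto_id.atTop_div_const hΛ)
  refine (((isBigO_tsum_exp_mul_smul hexponent hsummable).comp_tendsto hsubst).mul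
    (isBigO_refl (fun x => Real.exp (β * x)) atTop)).congr (fun x => ?_) fun x => ?_
  · simp only [Function.comp_apply, smul_eq_mul, ← tsum_mul_right, Real.exp_add]
    exact tsum_congr fun n => by ring
  · rw [Function.comp_apply, Real.exp_add]

/-- If `|aₙ| ≤ K n^δ`, then as `x → +∞` the tail over `n ≥ 2` satisfies
`∑_{n=2}^∞ |aₙ| n^{−1/2} exp(−c n^{1/Λ} e^{x/Λ} + βx)
  = O(exp(−c 2^{1/Λ} e^{x/Λ} + βx))`. -/
theorem dirichlet_tail_bound (δ c Λ β : ℝ) (hδ : 0 ≤ δ) (hc : 0 < c) (hΛ : 0 < Λ)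
    (a : ℕ → ℂ) (K : ℝ) (ha : ∀ n : ℕ, 1 ≤ n → ‖a n‖ ≤ K * (n : ℝ) ^ δ) :
    (fun x : ℝ =>
        ∑' n : ℕ, ‖a (n + 2)‖ * ((n : ℝ) + 2) ^ (-(1 / 2) : ℝ) *
          Real.exp (-c * ((n : ℝ) + 2) ^ (1 / Λ) * Real.exp (x / Λ) + β * x))
      =O[atTop] fun x : ℝ =>
        Real.exp (-c * (2 : ℝ) ^ (1 / Λ) * Real.exp (x / Λ) + β * x) := by
  have ha_isBigO : a =O[atTop] fun n : ℕ => (n : ℝ) ^ δ :=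
    .of_bound K <| (eventually_ge_atTop 1).mono fun n hn => by
      rw [Real.norm_of_nonneg (by positivity)]
      exact ha n hn
  exact_mod_cast dirichlet_tail_bound_general hc hΛ ha_isBigO (-(1 / 2)) β 2
end
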